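/- The double-complement map φ: u ↦ ū̄ on NCP(e,e,n+1) is a poset automorphism equal to multiplication of the underlying set by ζ_e ζ_{en} = ζ_{en}^{n+1}; it preserves the type of a partition (short symmetric, long symmetric, or asymmetric stay in their class, with complement exchanging short symmetric and long symmetric, and preserving asymmetric). -/

import Mathlib

/-!
Let `N = en` and `ζ = ζ_N`. An element `u` of `NCP(e,e,n+1)` is encoded by two periodic relations on
`ℤ`: `R x y` when `ζ^x` and `ζ^y` lie in the same part, and `Z x` when `ζ^x` lies in the part of `0`
(`NCData`, `NCPee.data`). Convexity of the polygons involved turns the geometric non-crossing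
condition into the usual combinatorial one.

The key fact is a description of the Kreweras complement `w` of `u` on a convex polygon, defined by
`σ_u σ_w = σ_triv`: for vertices `i < j`, they are related in `w` iff `[i, j)` is a union of parts
of `u` (`IsKrew.w_iff`), and they are related in `u` iff `(i, j]` is a union of parts of `w`
(`IsKrew.u_iff`).

For symmetric `u` the polygon is `μ_N` (`symCompl`). For asymmetric `u` it consists of
`0, ζ^(s+1), …, ζ^(s+n)`, where `ζ^s` lies in the part of `0` (`asymCompl`). In that case the
description of `w` depends on `s` at first sight; `AsymCompl.w_close_iff` and `AsymCompl.w_zero_iff`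
express it intrinsically by saturated intervals (`SatS`, `SatZ`), and `AsymCompl.u_close_iff` and
`AsymCompl.u_zero_iff` recover `u` from `w` in the same terms.

The claims follow.

* Being a union of parts is antitone in the partition, so complementation reverses the order.
* Applying the description of the complement to `w`, and the one of `u` in terms of `w`, shows that
  `x` and `y` are related in the double complement of `u` iff `x - 1` and `y - 1` are related in
  `u`, that is, by `μ_e`-invariance, iff `x - (n + 1)` and `y - (n + 1)` are. For the part of `0` the
  translation by `n + 1` appears directly. Hence the double complement is the rotation by
  `ζ^(n+1)`, which clearly preserves refinement.
* A partition with no long part has a saturated interval of length `n`, starting at a longest arc of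
  a part (`NCData.exists_sat`), so the complement of a short symmetric partition is long. A long part
  meets every window of length `n` without being contained in it (`NCData.not_sat_of_long`), so the
  complement of a long partition is short. The complement of an asymmetric partition has parts
  confined to windows of length `n`, hence no long part, and its part of `0` is not a singleton.
-/

open Set

noncomputable section
open scoped Classical

/-- `u` is a set-theoretical partition of the set `x ⊆ ℂ`. -/
def IsPartitionOf (x : Set ℂ) (u : Set (Set ℂ)) : Prop :=
  (∀ a ∈ u, a.Nonempty ∧ a ⊆ x) ∧ ∀ z ∈ x, ∃! a, a ∈ u ∧ z ∈ a

/-- The refinement order on partitions. -/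
def Refines (u v : Set (Set ℂ)) : Prop :=
  ∀ a ∈ u, ∃ b ∈ v, a ⊆ b

/-- A partition is non-crossing if the convex hulls of two parts can only meet
when the parts are equal. -/
def IsNoncrossing (u : Set (Set ℂ)) : Prop :=
  ∀ a ∈ u, ∀ b ∈ u, (convexHull ℝ a ∩ convexHull ℝ b).Nonempty → a = b

/-- The set-theoretical meet of two partitions: parts are the nonempty
intersections of parts. -/
def meetParts (u v : Set (Set ℂ)) : Set (Set ℂ) :=
  {s | s.Nonempty ∧ ∃ a ∈ u, ∃ b ∈ v, s = a ∩ b}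

/-- The set of `n`-th roots of unity. -/
def mu (n : ℕ) : Set ℂ := {z : ℂ | z ^ n = 1}

/-- `ζ_n = exp(2iπ/n)`. -/
def zeta (n : ℕ) : ℂ := Complex.exp (2 * (Real.pi : ℂ) * Complex.I / (n : ℂ))

/-- Multiplication of a partition by a complex constant. -/
def rotate (c : ℂ) (u : Set (Set ℂ)) : Set (Set ℂ) :=
  (fun a => (fun z => c * z) '' a) '' u

/-- Invariance of a partition under multiplication by the group `μ_e`. -/
def MuInvariant (e : ℕ) (u : Set (Set ℂ)) : Prop :=
  ∀ ζ : ℂ, ζ ^ e = 1 → rotate ζ u = u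

/-- `NCP(e,1,n)`: non-crossing partitions of `μ_{en}` fixed by the `μ_e`-action. -/
def NCPmu (e n : ℕ) : Set (Set (Set ℂ)) :=
  {u | IsPartitionOf (mu (e * n)) u ∧ IsNoncrossing u ∧ MuInvariant e u}

/-- A partition is long if `0` lies in the convex hull of one of its parts. -/
def IsLong (u : Set (Set ℂ)) : Prop :=
  ∃ a ∈ u, (0 : ℂ) ∈ convexHull ℝ a

/-- The partition `u^♭` obtained by forgetting `0`. -/
def flatNCP (u : Set (Set ℂ)) : Set (Set ℂ) :=
  {s | s.Nonempty ∧ ∃ a ∈ u, s = a \ {0}}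

/-- `NCP(e,e,n+1)`: non-crossing partitions of `μ_{en} ∪ {0}` such that the
partition obtained by forgetting `0` is `μ_e`-invariant. -/
def NCPee (e n : ℕ) : Set (Set (Set ℂ)) :=
  {u | IsPartitionOf (insert 0 (mu (e * n))) u ∧ IsNoncrossing u ∧
    MuInvariant e (flatNCP u)}

/-- The trivial (one-block) partition of `μ_{en} ∪ {0}`. -/
def trivEE (e n : ℕ) : Set (Set ℂ) := {insert 0 (mu (e * n))}

/-- The discrete partition of `μ_n`. -/
def discMu (n : ℕ) : Set (Set ℂ) := {s | ∃ z ∈ mu n, s = {z}}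

/-- `z'` is the counterclockwise successor of `z` on the boundary of the convex
set `b` (all remaining points of `b` are strictly on the left of the directed
line from `z` to `z'`). -/
def ccwSucc (b : Set ℂ) (z z' : ℂ) : Prop :=
  z ∈ b ∧ z' ∈ b ∧ z ≠ z' ∧
    ∀ w ∈ b, w ≠ z → w ≠ z' →
      0 < ((z' - z).re * (w - z).im - (z' - z).im * (w - z).re)

/-- `σ` is the permutation associated with a partition `u` (of a set in convex
position), sending each element of a part to its counterclockwise successor in
that part. -/
def IsSuccMapOn (u : Set (Set ℂ)) (σ : ℂ → ℂ) : Prop :=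
  ∀ b ∈ u, ∀ z ∈ b, (b = {z} → σ z = z) ∧ (b ≠ {z} → ccwSucc b z (σ z))

/-- Restriction of a partition to the subset `X`. -/
def resTo (X : Set ℂ) (u : Set (Set ℂ)) : Set (Set ℂ) :=
  {s | s.Nonempty ∧ ∃ a ∈ u, s = a ∩ X}

/-- `w` is the (classical) Kreweras complement of `u` in `v`, for partitions of
a subset `X ⊆ ℂ` in convex position: it is characterized by
`σ_u σ_w = σ_v` (composition of motions). -/
def KrewRel (X : Set ℂ) (u v w : Set (Set ℂ)) : Prop :=
  Refines u v ∧ Refines w v ∧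
    ∃ σu σv σw : ℂ → ℂ, IsSuccMapOn u σu ∧ IsSuccMapOn v σv ∧ IsSuccMapOn w σw ∧
      ∀ z ∈ X, σw (σu z) = σv z

/-- An element of `NCP(e,e,n+1)` is symmetric if `{0}` is a part (short
symmetric) or its flat is long (long symmetric); otherwise it is asymmetric. -/
def SymmPart (u : Set (Set ℂ)) : Prop :=
  ({0} : Set ℂ) ∈ u ∨ IsLong (flatNCP u)

/-- The map `* : NCP(e,1,n) → NCP(e,e,n+1)`: add `{0}` as a singleton part if
`u` is short, add `0` to the long part if `u` is long. -/
def starNCP (u : Set (Set ℂ)) : Set (Set ℂ) :=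
  if IsLong u then
    {s | ∃ a ∈ u, s = if (0 : ℂ) ∈ convexHull ℝ a then insert 0 a else a}
  else insert {(0 : ℂ)} u

/-- The part of `v` containing `0`. -/
def asymPart (v : Set (Set ℂ)) : Set ℂ := ⋃₀ {a ∈ v | (0 : ℂ) ∈ a}

/-- The union `ã` of the `μ_e`-orbit of the part of `v` containing `0`
(with `0` removed). -/
def tildePart (e : ℕ) (v : Set (Set ℂ)) : Set ℂ :=
  ⋃ ζ ∈ {z : ℂ | z ^ e = 1}, (fun z => ζ * z) '' (asymPart v \ {0})

/-- The map `♯ : NCP(e,e,n+1) → NCP(e,1,n)`. -/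
def sharpNCP (e : ℕ) (v : Set (Set ℂ)) : Set (Set ℂ) :=
  if SymmPart v then flatNCP v
  else insert (tildePart e v) {b ∈ flatNCP v | ¬ b ⊆ tildePart e v}

/-- The minimal asymmetric partition `m_ζ`, with only non-singleton part `{0, ζ}`. -/
def mzeta (e n : ℕ) (ζ : ℂ) : Set (Set ℂ) :=
  insert {0, ζ} {s | ∃ z ∈ mu (e * n), z ≠ ζ ∧ s = {z}}

/-- The set `a_ζ = {0, ζ_{en}ζ, ζ_{en}²ζ, …, ζ_{en}ⁿζ}`. -/
def azeta (e n : ℕ) (ζ : ℂ) : Set ℂ :=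
  insert 0 {z : ℂ | ∃ k : ℕ, 1 ≤ k ∧ k ≤ n ∧ z = zeta (e * n) ^ k * ζ}

/-- The maximal asymmetric partition `M_ζ`, with asymmetric part `a_ζ` and
remaining parts `ζ' a_ζ ∖ {0}` for `ζ' ∈ μ_e ∖ {1}`. -/
def Mzeta (e n : ℕ) (ζ : ℂ) : Set (Set ℂ) :=
  insert (azeta e n ζ)
    {s | ∃ ζ' : ℂ, ζ' ^ e = 1 ∧ ζ' ≠ 1 ∧ s = (fun z => ζ' * z) '' (azeta e n ζ \ {0})}

/-- `w` is the complement `u\v` of `u` in `v`, in `NCP(e,e,n+1)`, following the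
three cases of the definition: (A) both symmetric, computed through the flats
in `NCP(e,1,n)`; (B) `v` asymmetric, computed in some interval `[disc, M_ζ]`
through restriction to `a_ζ`; (C) `u` asymmetric, computed through the
isomorphisms `ψ_ζ` and `φ_ζ` with the non-crossing partitions of `a_ζ`. -/
def IsComplEE (e n : ℕ) (u v w : Set (Set ℂ)) : Prop :=
  Refines u v ∧
    ((SymmPart u ∧ SymmPart v ∧
        ∃ k, KrewRel (mu (e * n)) (flatNCP u) (flatNCP v) k ∧ w = starNCP k) ∨
     (¬ SymmPart v ∧ ∃ ζ : ℂ, ζ ^ (e * n) = 1 ∧ Refines v (Mzeta e n ζ) ∧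
        Refines w (Mzeta e n ζ) ∧
        KrewRel (azeta e n ζ) (resTo (azeta e n ζ) u) (resTo (azeta e n ζ) v)
          (resTo (azeta e n ζ) w)) ∨
     (¬ SymmPart u ∧ ∃ ζ : ℂ, ζ ^ (e * n) = 1 ∧ Refines (mzeta e n ζ) u ∧
        Refines w (Mzeta e n ζ) ∧
        KrewRel (azeta e n ζ) (resTo (azeta e n ζ) u) (resTo (azeta e n ζ) v)
          (resTo (azeta e n ζ) w)))

/-- Height of an element of `NCP(e,e,n+1)` with `m` parts: `n - (m-1)/e` in the
short symmetric case, `n+1 - (m-1)/e` in the long symmetric case,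
`n+1 - m/e` in the asymmetric case. -/
def htEE (e n : ℕ) (u : Set (Set ℂ)) : ℤ :=
  if ({0} : Set ℂ) ∈ u then (n : ℤ) - ((u.ncard : ℤ) - 1) / (e : ℤ)
  else if IsLong (flatNCP u) then (n : ℤ) + 1 - ((u.ncard : ℤ) - 1) / (e : ℤ)
  else (n : ℤ) + 1 - (u.ncard : ℤ) / (e : ℤ)

/-- The height-one symmetric partition `u_{p,q}`, with non-singleton parts the
`e` rotates `ζ_e^i {ζ_{ne}^p, ζ_{ne}^q}`. -/
def upq (e n : ℕ) (p q : ℤ) : Set (Set ℂ) :=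
  {s | ∃ ζ : ℂ, ζ ^ e = 1 ∧ s = {ζ * zeta (e * n) ^ p, ζ * zeta (e * n) ^ q}} ∪
    {s | ∃ z ∈ insert (0 : ℂ) (mu (e * n)), s = {z} ∧
      ∀ ζ : ℂ, ζ ^ e = 1 → z ≠ ζ * zeta (e * n) ^ p ∧ z ≠ ζ * zeta (e * n) ^ q}

/-- The height-one asymmetric partition `u_p`, with unique non-singleton part
`{0, ζ_{en}^p}`. -/
def upt (e n : ℕ) (p : ℤ) : Set (Set ℂ) :=
  insert {0, zeta (e * n) ^ p}
    {s | ∃ z ∈ mu (e * n), z ≠ zeta (e * n) ^ p ∧ s = {z}}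

/-- A weakly increasing chain of length `N` in a set `S` of partitions. -/
def IsChainOf (S : Set (Set (Set ℂ))) (N : ℕ) (c : Fin N → Set (Set ℂ)) : Prop :=
  (∀ i, c i ∈ S) ∧ ∀ i j : Fin N, i ≤ j → Refines (c i) (c j)

/-! ### Kreweras complement on a cyclic set -/

/-- Cyclic distance from `a` to `b`, going upwards in `Fin m`. -/
def cd {m : ℕ} (a b : Fin m) : ℕ := if a.val ≤ b.val then b.val - a.val else b.val + m - a.val

theorem cd_lt {m : ℕ} (i x : Fin m) : cd i x < m := by
  have := i.isLt
  have := x.isLt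
  unfold cd
  split_ifs <;> omega

theorem cd_self {m : ℕ} (i : Fin m) : cd i i = 0 := by
  simp [cd]

theorem cd_inj {m : ℕ} {i x y : Fin m} (h : cd i x = cd i y) : x = y := by
  have := i.isLt
  have := x.isLt
  have := y.isLt
  apply Fin.ext
  unfold cd at h
  split_ifs at h <;> omega

/-- Change of base point for cyclic distances. -/
theorem cd_rel {m : ℕ} (i x y : Fin m) :
    (cd i x ≤ cd i y ∧ cd x y + cd i x = cd i y) ∨
      (cd i y < cd i x ∧ cd x y + cd i x = cd i y + m) := by
  have := i.isLt
  have := x.isLt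
  have := y.isLt
  unfold cd
  split_ifs <;> omega

theorem cd_succ {m : ℕ} (i : Fin m) {p q : Fin m}
    (h : q.val = if p.val + 1 < m then p.val + 1 else 0) :
    (cd i p + 1 < m ∧ cd i q = cd i p + 1) ∨ (cd i p + 1 = m ∧ cd i q = 0) := by
  have := i.isLt
  have := p.isLt
  unfold cd
  split_ifs at * <;> omega

/-- `s` is the cyclic successor map of the equivalence relation `U` on `Fin m`. -/
structure IsSucc {m : ℕ} (U : Fin m → Fin m → Prop) (s : Fin m → Fin m) : Prop where
  equiv : Equivalence U
  mem : ∀ i, U i (s i)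
  gap : ∀ i k, U i k → k ≠ i → s i ≠ i ∧ cd i (s i) ≤ cd i k

/-- Cyclic form of non-crossing: the related pairs `i, j` and `q, y` do not cross when the four
points are met in the order `i, q, j, y` going around the circle from `i`. -/
theorem cyc_nc {m : ℕ} {W : Fin m → Fin m → Prop} (hW : Equivalence W)
    (nc : ∀ a b c d : Fin m, a < b → b < c → c < d → W a c → W b d → W a b)
    {i q j y : Fin m} (h0 : q ≠ i) (h1 : cd i q < cd i j) (h2 : cd i j < cd i y)
    (hij : W i j) (hqy : W q y) : W i q := by
  have e1 : q.val ≠ i.val := fun h => h0 (Fin.ext h)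
  have b1 := i.isLt
  have b2 := q.isLt
  have b3 := j.isLt
  have b4 := y.isLt
  have key : (i < q ∧ q < j ∧ j < y) ∨ (y < i ∧ i < q ∧ q < j) ∨ (j < y ∧ y < i ∧ i < q) ∨
      (q < j ∧ j < y ∧ y < i) := by
    simp only [Fin.lt_def]
    unfold cd at h1 h2
    split_ifs at h1 h2 <;> omega
  rcases key with ⟨a, b, c⟩ | ⟨a, b, c⟩ | ⟨a, b, c⟩ | ⟨a, b, c⟩
  · exact nc _ _ _ _ a b c hij hqy
  · have := nc _ _ _ _ a b c (hW.symm hqy) hij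
    exact hW.trans (hW.symm this) (hW.symm hqy)
  · have := nc _ _ _ _ a b c (hW.symm hij) (hW.symm hqy)
    exact hW.trans (hW.trans hij this) (hW.symm hqy)
  · have := nc _ _ _ _ a b c hqy (hW.symm hij)
    exact hW.trans hij (hW.symm this)

/-- If `[i, j)` is not saturated, some element of `[i, j)` has its `U`-successor outside. -/
theorem exists_exit {m : ℕ} {U : Fin m → Fin m → Prop} {s : Fin m → Fin m} (h : IsSucc U s)
    {i j a b : Fin m} (hab : U a b) (ha : cd i a < cd i j) (hb : cd i j ≤ cd i b) :
    ∃ z, cd i z < cd i j ∧ cd i j ≤ cd i (s z) := by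
  classical
  obtain ⟨z, hz, hmax⟩ := Finset.exists_max_image
    (Finset.univ.filter fun z => U a z ∧ cd i z < cd i j) (fun z => cd i z)
    ⟨a, by simp [ha, h.equiv.refl a]⟩
  simp only [Finset.mem_filter, Finset.mem_univ, true_and] at hz hmax
  refine ⟨z, hz.2, ?_⟩
  by_contra! hlt
  have h1 := hmax (s z) ⟨h.equiv.trans hz.1 (h.mem z), hlt⟩
  have hbz : b ≠ z := by rintro rfl; omega
  obtain ⟨h2, h3⟩ := h.gap z b (h.equiv.trans (h.equiv.symm hz.1) hab) hbz
  have e1 : cd i (s z) ≠ cd i z := fun h => h2 (cd_inj h)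
  have r1 := cd_rel i z (s z)
  have r2 := cd_rel i z b
  have b1 := cd_lt i b
  have hz2 := hz.2
  omega

/-- Data of a pair of relations whose successor maps compose to the cyclic shift. -/
structure IsKrew {m : ℕ} (U W : Fin m → Fin m → Prop) (su sw : Fin m → Fin m) : Prop where
  u : IsSucc U su
  w : IsSucc W sw
  nc : ∀ a b c d : Fin m, a < b → b < c → c < d → W a c → W b d → W a b
  comp : ∀ i, (sw (su i)).val = if i.val + 1 < m then i.val + 1 else 0

namespace IsKrew

variable {m : ℕ} {U W : Fin m → Fin m → Prop} {su sw : Fin m → Fin m}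

/-- If `W i j` and `[i, j)` were not `U`-saturated, some `z` in `[i, j)` has `su z` outside, and
the `W`-arc from `su z` to its successor `z + 1` would cross or skip the block of `i` and `j`. -/
theorem sat_of_w (h : IsKrew U W su sw) {i j : Fin m} (hij : W i j) {a b : Fin m} (hab : U a b)
    (ha : cd i a < cd i j) : cd i b < cd i j := by
  by_contra! hb
  obtain ⟨z, hz, hs⟩ := exists_exit h.u hab ha hb
  have hc := cd_succ i (h.comp z)
  set y := su z with hy
  set q := sw y with hq
  have hyq : W y q := h.w.mem y
  have b1 := cd_lt i y
  have b2 := cd_lt i j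
  have b0 := cd_self i
  have hqi : q ≠ i := by
    rintro h; rw [h] at hc; omega
  have hyi : y ≠ i := by
    rintro h; rw [h] at hs; omega
  -- non-crossing forces `i` into the part of `y`, although `i` lies between `y` and its
  -- successor `q`
  have hiy : W i y := by
    by_cases hyj : y = j
    · rw [hyj]; exact hij
    by_cases hqj : q = j
    · rw [hqj] at hyq
      exact h.w.equiv.trans hij (h.w.equiv.symm hyq)
    have e1 : cd i y ≠ cd i j := fun h => hyj (cd_inj h)
    have e2 : cd i q ≠ cd i j := fun h => hqj (cd_inj h)
    have : W i q := cyc_nc h.w.equiv h.nc (y := y) hqi (by omega) (by omega) hij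
      (h.w.equiv.symm hyq)
    exact h.w.equiv.trans this (h.w.equiv.symm hyq)
  obtain ⟨h4, h3⟩ := h.w.gap y i (h.w.equiv.symm hiy) (Ne.symm hyi)
  rw [← hq] at h3 h4
  have e5 : cd i q ≠ cd i y := fun h => h4 (cd_inj h)
  have e3 : cd i q ≠ cd i i := fun h => hqi (cd_inj h)
  have e4 : cd i y ≠ cd i i := fun h => hyi (cd_inj h)
  have r1 := cd_rel i y q
  have r2 := cd_rel i y i
  omega

theorem su_surj (h : IsKrew U W su sw) (j : Fin m) : ∃ p, su p = j := by
  have : Function.Injective su := by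
    intro a b hab
    have h1 := h.comp a
    have h2 := h.comp b
    rw [hab] at h1
    have := a.isLt
    have := b.isLt
    apply Fin.ext
    split_ifs at h1 h2 <;> omega
  exact Finite.surjective_of_injective this j

/-- Converse of `sat_of_w`, by induction on the cyclic distance from `j` to `i`: the `W`-successor
`q` of `j` is `p + 1`, where `su p = j`; as `[i, j)` and `[j, q)` are saturated, so is `[i, q)`. -/
theorem w_of_sat (h : IsKrew U W su sw) (i : Fin m) : ∀ (d : ℕ) (j : Fin m), cd j i = d →
    (∀ a b, U a b → cd i a < cd i j → cd i b < cd i j) → W j i := by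
  intro d
  induction d using Nat.strong_induction_on with
  | _ d ih =>
  intro j hd hsat
  by_cases hji : j = i
  · rw [hji]; exact h.w.equiv.refl i
  obtain ⟨p, hp⟩ := h.su_surj j
  have hc := h.comp p
  rw [hp] at hc
  replace hc := cd_succ i hc
  have hUp : U p j := hp ▸ h.u.mem p
  have hW : W j (sw j) := h.w.mem j
  set q := sw j with hq
  have hpj : cd i j ≤ cd i p := by
    by_contra! h1
    exact absurd (hsat _ _ hUp h1) (lt_irrefl _)
  have b0 := cd_self i
  have e1 : cd i j ≠ cd i i := fun h => hji (cd_inj h)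
  refine h.w.equiv.trans hW ?_
  by_cases hqi : q = i
  · rw [hqi]; exact h.w.equiv.refl i
  have e2 : cd i q ≠ cd i i := fun h => hqi (cd_inj h)
  have r1 := cd_rel i q i
  have r2 := cd_rel i j i
  refine ih (cd q i) (by omega) q rfl ?_
  intro a b hab ha
  by_contra! hb
  have s1 := hsat a b hab
  have s3 := h.sat_of_w hW hab
  have r3 := cd_rel i j b
  have r4 := cd_rel i j q
  have r5 := cd_rel i j a
  have b1 := cd_lt i b
  omega

/-- If `U i j`, then `(i, j]` is saturated for `W`: otherwise `sat_of_w`, applied to `W`-related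
points inside and outside, would separate `i` from `j`. -/
theorem sat_of_u (h : IsKrew U W su sw) {i j : Fin m} (hij : U i j) (hne : i ≠ j)
    {a b : Fin m} (hab : W a b)
    (ha : 0 < cd i a ∧ cd i a ≤ cd i j) : 0 < cd i b ∧ cd i b ≤ cd i j := by
  by_contra! hb
  have s1 := h.sat_of_w hab (h.u.equiv.symm hij)
  have b0 := cd_self i
  have e2 : cd i j ≠ cd i i := fun h => hne (cd_inj h).symm
  have r1 := cd_rel i a i
  have r2 := cd_rel i a j
  have r3 := cd_rel i a b
  have b1 := cd_lt i b
  have b2 := cd_lt i j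
  omega

/-- Converse of `sat_of_u`, by induction on the cyclic distance from `i` to `j`: one passes from
`i` to its `U`-successor, which saturation forces to lie in `(i, j]`. -/
theorem u_of_sat (h : IsKrew U W su sw) (j : Fin m) : ∀ (d : ℕ) (i : Fin m), cd i j = d →
    (∀ a b, W a b → 0 < cd i a → cd i a ≤ cd i j → 0 < cd i b ∧ cd i b ≤ cd i j) → U i j := by
  intro d
  induction d using Nat.strong_induction_on with
  | _ d ih =>
  intro i hd hsat
  by_cases hij : i = j
  · rw [hij]; exact h.u.equiv.refl j
  have hc := cd_succ i (h.comp i)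
  have hW := h.w.mem (su i)
  have hU := h.u.mem i
  set k := su i with hk
  set q := sw k with hq
  have b0 := cd_self i
  have e1 : cd i j ≠ cd i i := fun h => hij (cd_inj h).symm
  have b1 := cd_lt i j
  have hki : 0 < cd i k ∧ cd i k ≤ cd i j :=
    hsat q k (h.w.equiv.symm hW) (by omega) (by omega)
  refine h.u.equiv.trans hU ?_
  have hik : i ≠ k := by
    intro h'
    rw [← h'] at hki
    omega
  have r1 := cd_rel i k j
  refine ih (cd k j) (by omega) k rfl ?_
  intro a b hab h1 h2
  have s1 := hsat a b hab
  have s2 := h.sat_of_u hU hik (h.w.equiv.symm hab)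
  have r3 := cd_rel i k b
  have r4 := cd_rel i k a
  have c1 := cd_lt i b
  have c2 := cd_lt i a
  omega

/-- Points `i < j` are related in the complement iff `[i, j)` is saturated. -/
theorem w_iff (h : IsKrew U W su sw) {i j : Fin m} (hij : i < j) :
    W i j ↔ ∀ a b, U a b → i ≤ a → a < j → i ≤ b ∧ b < j := by
  have key : ∀ x : Fin m, cd i x < cd i j ↔ i ≤ x ∧ x < j := by
    intro x
    have := x.isLt
    have := i.isLt
    have := j.isLt
    simp only [Fin.le_def, Fin.lt_def] at *
    unfold cd
    split_ifs <;> omega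
  constructor
  · intro hw a b hab h1 h2
    rw [← key]
    exact h.sat_of_w hw hab ((key a).2 ⟨h1, h2⟩)
  · intro hs
    apply h.w.equiv.symm
    apply h.w_of_sat i _ j rfl
    intro a b hab ha
    rw [key] at *
    exact hs a b hab ha.1 ha.2

/-- Points `i < j` are related iff `(i, j]` is saturated for the complement. -/
theorem u_iff (h : IsKrew U W su sw) {i j : Fin m} (hij : i < j) :
    U i j ↔ ∀ a b, W a b → i < a → a ≤ j → i < b ∧ b ≤ j := by
  have key : ∀ x : Fin m, (0 < cd i x ∧ cd i x ≤ cd i j) ↔ i < x ∧ x ≤ j := by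
    intro x
    have := x.isLt
    have := i.isLt
    have := j.isLt
    simp only [Fin.le_def, Fin.lt_def] at *
    unfold cd
    split_ifs <;> omega
  constructor
  · intro hw a b hab h1 h2
    rw [← key]
    exact h.sat_of_u hw hij.ne hab ((key a).2 ⟨h1, h2⟩)
  · intro hs
    apply h.u_of_sat j _ i rfl
    intro a b hab h1 h2
    rw [key]
    have := (key a).1 ⟨h1, h2⟩
    exact hs a b hab this.1 this.2

end IsKrew

/-! ### Combinatorial shadow of a partition -/

theorem mul_trich {N : ℤ} (hN : 0 < N) (k : ℤ) :
    (k = 0 ∧ k * N = 0) ∨ (k = 1 ∧ k * N = N) ∨ (k = -1 ∧ k * N = -N) ∨ 2 * N ≤ k * N ∨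
      k * N ≤ -(2 * N) := by
  have h : k = 0 ∨ k = 1 ∨ k = -1 ∨ 2 ≤ k ∨ k ≤ -2 := by omega
  rcases h with rfl | rfl | rfl | h | h
  · simp
  · simp
  · simp
  · right; right; right; left; nlinarith
  · right; right; right; right; nlinarith

/-- Every integer has a representative modulo `N` in each half-open window of length `N`. -/
theorem exists_window {N : ℤ} (hN : 0 < N) (x y : ℤ) :
    ∃ k : ℤ, x < y + k * N ∧ y + k * N ≤ x + N := by
  have h1 := Int.emod_nonneg (y - x - 1) hN.ne'
  have h2 := Int.emod_lt_of_pos (y - x - 1) hN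
  have h3 := Int.emod_add_mul_ediv (y - x - 1) N
  refine ⟨-((y - x - 1) / N), ?_, ?_⟩ <;>
  · have : -((y - x - 1) / N) * N = - (N * ((y - x - 1) / N)) := by ring
    omega

theorem exists_window' {N : ℤ} (hN : 0 < N) (x y : ℤ) :
    ∃ k : ℤ, x ≤ y + k * N ∧ y + k * N < x + N := by
  obtain ⟨k, h1, h2⟩ := exists_window hN (x - 1) y
  exact ⟨k, by omega, by omega⟩

/-- The combinatorial shadow of an element of `NCP(e,e,n+1)`, with `N = en`: `R x y` says that
`ζ_N^x` and `ζ_N^y` lie in the same part, `Z x` that `ζ_N^x` lies in the part of `0`.The fields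
record `μ_e`-invariance (`shift`), non-crossing (`nc`, and `znc` for the part of `0` and the
others), and that a part containing two points differing by `ζ_e` contains `0` (`zlong`). -/
structure NCData (n N : ℤ) (R : ℤ → ℤ → Prop) (Z : ℤ → Prop) : Prop where
  npos : 0 < n
  two : 2 * n ≤ N
  dvd : n ∣ N
  refl : ∀ x, R x x
  symm : ∀ {x y}, R x y → R y x
  trans : ∀ {x y z}, R x y → R y z → R x z
  per : ∀ x, R x (x + N)
  shift : ∀ {x y}, R x y → R (x + n) (y + n)
  nc : ∀ {a b c d}, a < b → b < c → c < d → d < a + N → R a c → R b d → R a b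
  zz : ∀ {x y}, Z x → Z y → R x y
  zr : ∀ {x y}, Z x → R x y → Z y
  znc : ∀ {x t y}, x < t → t < y → y < x + n → R x y → Z t → Z x
  zlong : ∀ {x}, R x (x + n) → Z x

/-- `[x, y)` is a union of parts (as a set of residues modulo `N`). -/
def Sat (N : ℤ) (R : ℤ → ℤ → Prop) (x y : ℤ) : Prop :=
  ∀ a b, R a b → x ≤ a → a < y → ∃ k : ℤ, x ≤ b + k * N ∧ b + k * N < y

/-- `[x, y)` is a union of parts and avoids all rotates of the part of `0`. Related points are
viewed through lifts at distance less than `n`, which exist when no part is long, see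
`NCData.exists_close`. -/
def SatS (n : ℤ) (R : ℤ → ℤ → Prop) (Z : ℤ → Prop) (x y : ℤ) : Prop :=
  ∀ z, x ≤ z → z < y → (∀ k : ℤ, ¬ Z (z + k * n)) ∧
    ∀ t, R z t → t < z + n → z < t + n → x ≤ t ∧ t < y

/-- `[y - n, y)` meets the part of `0` and contains every part that it meets, related points being
viewed through lifts at distance less than `n`. -/
def SatZ (n : ℤ) (R : ℤ → ℤ → Prop) (Z : ℤ → Prop) (y : ℤ) : Prop :=
  (∃ z, y - n ≤ z ∧ z < y ∧ Z z) ∧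
    ∀ z z', R z z' → z' < z + n → z < z' + n → y - n ≤ z → z < y → y - n ≤ z' ∧ z' < y

namespace NCData

variable {n N : ℤ} {R : ℤ → ℤ → Prop} {Z : ℤ → Prop}

theorem Npos (D : NCData n N R Z) : 0 < N := by have := D.npos; have := D.two; omega

theorem per_mul (D : NCData n N R Z) (k x : ℤ) : R x (x + k * N) := by
  induction k using Int.induction_on with
  | zero => simpa using D.refl x
  | succ k ih =>
    have := D.trans ih (D.per _)
    convert this using 1; ring
  | pred k ih =>
    have := D.trans ih (D.symm (D.per (x + (-(k : ℤ) - 1) * N)|> fun h => by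
      convert h using 1; ring))
    exact this

theorem shift_nat (D : NCData n N R Z) (k : ℕ) {x y : ℤ} (h : R x y) :
    R (x + k * n) (y + k * n) := by
  induction k with
  | zero => simpa using h
  | succ k ih =>
    have := D.shift ih
    convert this using 1 <;> push_cast <;> ring

theorem shift_mul (D : NCData n N R Z) (k : ℤ) {x y : ℤ} (h : R x y) :
    R (x + k * n) (y + k * n) := by
  obtain ⟨e, he⟩ := D.dvd
  have hN := D.Npos
  have hn := D.npos
  have he0 : 0 < e := by
    by_contra! h0
    nlinarith
  -- add a large multiple of the period to make the shift non-negative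
  obtain ⟨m, hm⟩ : ∃ m : ℕ, (m : ℤ) = k + |k| * e := by
    refine ⟨(k + |k| * e).toNat, Int.toNat_of_nonneg ?_⟩
    have h1 := neg_abs_le k
    have h2 : |k| ≤ |k| * e := le_mul_of_one_le_right (abs_nonneg k) he0
    linarith
  have h1 := D.shift_nat m h
  have e1 : ∀ x : ℤ, x + m * n = (x + k * n) + |k| * N := by
    intro x; rw [hm, he]; ring
  rw [e1, e1] at h1
  exact D.trans (D.per_mul _ _) (D.trans h1 (D.symm (D.per_mul _ _)))

theorem unshift (D : NCData n N R Z) {x y : ℤ} (h : R (x + n) (y + n)) : R x y := by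
  have := D.shift_mul (-1) h
  simpa using this

theorem shift_neg (D : NCData n N R Z) {x y : ℤ} (h : R x y) : R (x - n) (y - n) := by
  have := D.shift_mul (-1) h
  simpa [sub_eq_add_neg] using this

theorem zper (D : NCData n N R Z) {x : ℤ} (k : ℤ) : Z (x + k * N) ↔ Z x :=
  ⟨fun h => D.zr h (D.symm (D.per_mul k x)), fun h => D.zr h (D.per_mul k x)⟩

/-- In a partition that is not long, related points are related through lifts at distance
less than `n`. -/
theorem exists_close (D : NCData n N R Z) (nl : ∀ x, ¬ R x (x + n)) {x y : ℤ} (h : R x y) :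
    ∃ k : ℤ, R x (y + k * N) ∧ y + k * N < x + n ∧ x < y + k * N + n := by
  have hn := D.npos
  have htwo := D.two
  obtain ⟨k, h1, h2⟩ := exists_window' D.Npos x y
  have hR : R x (y + k * N) := D.trans h (D.per_mul k y)
  by_cases c1 : y + k * N < x + n
  · exact ⟨k, hR, c1, by omega⟩
  by_cases c2 : x + N < y + k * N + n
  · refine ⟨k - 1, ?_, ?_, ?_⟩
    · exact D.trans h (D.per_mul _ y)
    · have : (k - 1) * N = k * N - N := by ring
      omega
    · have : (k - 1) * N = k * N - N := by ring
      omega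
  exfalso
  by_cases c3 : y + k * N = x + n
  · exact nl x (c3 ▸ hR)
  by_cases c4 : y + k * N + n = x + N
  · apply nl (y + k * N)
    rw [c4]
    exact D.trans (D.symm hR) (D.per x)
  · exact nl x (D.nc (b := x + n) (c := y + k * N) (d := y + k * N + n) (by omega) (by omega)
      (by omega) (by omega) hR (D.shift hR))

/-- Two consecutive arcs of length less than `n` in a part span less than `n`, since otherwise the
part would cross its rotate by `ζ_e`. -/
theorem close_trans (D : NCData n N R Z) (nl : ∀ x, ¬ R x (x + n)) {x y z : ℤ} (h1 : R x y)
    (h2 : R y z) (hxy : y < x + n) (hyz : z < y + n) : z < x + n := by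
  have hn := D.npos
  have htwo := D.two
  by_contra! h
  rcases h.eq_or_lt with h | h
  · exact nl x (h ▸ D.trans h1 h2)
  · have := D.nc (a := y) (b := x + n) (c := z) (d := y + n) (by omega) (by omega)
      (by omega) (by omega) h2 (D.shift h1)
    exact nl x (D.trans h1 this)

theorem zshift_of_long (D : NCData n N R Z) (hs : (∀ x, ¬ Z x) ∨ ∃ x, R x (x + n)) {x : ℤ}
    (h : Z x) : R x (x + n) := by
  rcases hs with hs | ⟨y, hy⟩
  · exact absurd h (hs x)
  · have h1 := D.zz h (D.zlong hy)
    exact D.trans h1 (D.trans hy (D.symm (D.shift h1)))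

/-- A partition which is not long has a saturated interval of length `n`: start it at the left
end of a longest arc. -/
theorem exists_sat (D : NCData n N R Z) (nl : ∀ x, ¬ R x (x + n)) : ∃ x, Sat N R x (x + n) := by
  have hn := D.npos
  have htwo := D.two
  obtain ⟨d, ⟨hd0, hdn, x, hx⟩, hmax⟩ : ∃ d : ℤ, (0 ≤ d ∧ d < n ∧ ∃ x, R x (x + d)) ∧
      ∀ d', (0 ≤ d' ∧ d' < n ∧ ∃ x, R x (x + d')) → d' ≤ d := by
    apply Int.exists_greatest_of_bdd
    · exact ⟨n, fun z hz => hz.2.1.le⟩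
    · exact ⟨0, le_rfl, hn, 0, by simpa using D.refl 0⟩
  have hm : ∀ a b, R a b → a ≤ b → b < a + n → b - a ≤ d := by
    intro a b h1 h2 h3
    exact hmax _ ⟨by omega, by omega, a, by simpa using h1⟩
  refine ⟨x, fun a b hab h1 h2 => ?_⟩
  obtain ⟨k, hk, k1, k2⟩ := D.exists_close nl hab
  refine ⟨k, ?_⟩
  generalize b + k * N = c at *
  by_contra! hc
  rcases lt_or_ge c x with h3 | h3
  · have := hm c a (D.symm hk) (by omega) (by omega)
    have h4 : R c x := by
      rcases h1.eq_or_lt with rfl | h1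
      · exact D.symm hk
      rcases lt_trichotomy a (x + d) with h5 | h5 | h5
      · exact D.nc (c := a) (d := x + d) (by omega) (by omega) (by omega) (by omega)
          (D.symm hk) hx
      · rw [← h5] at hx
        exact D.trans (D.symm hk) (D.symm hx)
      · omega
    have h5 := D.trans h4 hx
    have := hm c (x + d) h5 (by omega) (D.close_trans nl h4 hx (by omega) (by omega))
    omega
  · have h6 := hc h3
    have := hm a c hk (by omega) (by omega)
    have h4 : R a (x + n) := by
      rcases h6.eq_or_lt with h6 | h6
      · exact h6 ▸ hk
      rcases lt_trichotomy c (x + d + n) with h5 | h5 | h5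
      · exact D.nc (c := c) (d := x + d + n) (by omega) (by omega) (by omega) (by omega)
          hk (D.shift hx |> fun h => by convert h using 1)
      · have := D.shift hx
        rw [← h5] at this
        exact D.trans hk (D.symm this)
      · omega
    have h5 := D.trans h4 (D.shift hx)
    have := hm a (x + d + n) h5 (by omega)
      (D.close_trans nl h4 (D.shift hx) (by omega) (by omega))
    omega

theorem Sat.shift_aux (D : NCData n N R Z) {x y : ℤ} (h : SatS n R Z x y) (k : ℤ) :
    SatS n R Z (x + k * n) (y + k * n) := by
  intro z h1 h2
  obtain ⟨h3, h4⟩ := h (z - k * n) (by omega) (by omega)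
  refine ⟨fun j hj => h3 (k + j) (by convert hj using 1; ring), fun z' h5 h6 h7 => ?_⟩
  have := D.shift_mul (-k) h5
  have := h4 (z' - k * n) (by convert this using 1 <;> ring) (by omega) (by omega)
  omega

theorem satS_shift (D : NCData n N R Z) {x y : ℤ} (k : ℤ) :
    SatS n R Z (x + k * n) (y + k * n) ↔ SatS n R Z x y := by
  refine ⟨fun h => ?_, fun h => Sat.shift_aux D h k⟩
  have := Sat.shift_aux D h (-k)
  convert this using 1 <;> ring

theorem shift_iff (D : NCData n N R Z) {x y : ℤ} (k : ℤ) :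
    R (x + k * n) (y + k * n) ↔ R x y := by
  refine ⟨fun h => ?_, fun h => D.shift_mul k h⟩
  have := D.shift_mul (-k) h
  convert this using 1 <;> ring

theorem satZ_per_aux (D : NCData n N R Z) {y : ℤ} (k : ℤ) (h : SatZ n R Z y) :
    SatZ n R Z (y + k * N) := by
  obtain ⟨⟨z, h1, h2, h3⟩, h⟩ := h
  refine ⟨⟨z + k * N, by omega, by omega, (D.zper k).2 h3⟩, fun z z' hz c1 c2 c3 c4 => ?_⟩
  have := h (z - k * N) (z' - k * N) ?_ (by omega) (by omega) (by omega) (by omega)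
  · omega
  · have p : ∀ x, R (x - k * N) x := fun x => by
      have := D.per_mul k (x - k * N)
      simpa using this
    exact D.trans (p z) (D.trans hz (D.symm (p z')))

theorem satZ_per (D : NCData n N R Z) {y : ℤ} (k : ℤ) :
    SatZ n R Z (y + k * N) ↔ SatZ n R Z y := by
  refine ⟨fun h => ?_, D.satZ_per_aux k⟩
  have := D.satZ_per_aux (-k) h
  convert this using 1; ring

theorem satS_union {x y z : ℤ} (h1 : SatS n R Z x y) (h2 : SatS n R Z y z) (hxy : x ≤ y)
    (hyz : y ≤ z) : SatS n R Z x z := by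
  intro a ha hb
  rcases lt_or_ge a y with h | h
  · obtain ⟨h3, h4⟩ := h1 a ha h
    exact ⟨h3, fun z' c1 c2 c3 => by have := h4 z' c1 c2 c3; omega⟩
  · obtain ⟨h3, h4⟩ := h2 a h hb
    exact ⟨h3, fun z' c1 c2 c3 => by have := h4 z' c1 c2 c3; omega⟩

end NCData

/-! ### The asymmetric complement -/

/-- The complement relation between an asymmetric partition `(Ru, Zu)`, whose part of `0`
contains `ζ_N^s`, and `(Rw, Zw)`, read off in the window `0, s + 1, …, s + n`.The
fields `k0`, `k1` express `w` through `u` and `k0'`, `k1'` express `u` through `w`, while `wz` and `wr`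
say that the parts of `w` are confined to windows. -/
structure AsymCompl (n N s : ℤ) (Ru : ℤ → ℤ → Prop) (Zu : ℤ → Prop) (Rw : ℤ → ℤ → Prop)
    (Zw : ℤ → Prop) : Prop where
  u : NCData n N Ru Zu
  w : NCData n N Rw Zw
  unl : ∀ x, ¬ Ru x (x + n)
  zs : Zu s
  wz : ∀ a, Zw a → ∃ k : ℤ, s < a + k * N ∧ a + k * N ≤ s + n
  wr : ∀ a b, Rw a b → s < a → a ≤ s + n → ∃ k : ℤ, s < b + k * N ∧ b + k * N ≤ s + n
  k0 : ∀ y, s < y → y ≤ s + n → (Zw y ↔ (∀ b, y ≤ b → b ≤ s + n → ¬ Zu b) ∧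
    ∀ a b, s < a → a < y → y ≤ b → b ≤ s + n → ¬ Ru a b)
  k1 : ∀ x y, s < x → x < y → y ≤ s + n → (Rw x y ↔ ∀ a, x ≤ a → a < y → ¬ Zu a ∧
    ∀ b, s < b → b ≤ s + n → Ru a b → x ≤ b ∧ b < y)
  k0' : ∀ y, s < y → y ≤ s + n → (Zu y ↔ ∀ a, s < a → a ≤ y → ¬ Zw a ∧
    ∀ b, s < b → b ≤ s + n → Rw a b → b ≤ y)
  k1' : ∀ x y, s < x → x < y → y ≤ s + n → (Ru x y ↔ ∀ a, x < a → a ≤ y → ¬ Zw a ∧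
    ∀ b, s < b → b ≤ s + n → Rw a b → x < b ∧ b ≤ y)

namespace AsymCompl

variable {n N s : ℤ} {Ru Rw : ℤ → ℤ → Prop} {Zu Zw : ℤ → Prop}

/-- The complement of an asymmetric partition has no long part. -/
theorem wnl (h : AsymCompl n N s Ru Zu Rw Zw) (x : ℤ) : ¬ Rw x (x + n) := by
  intro hx
  have hn := h.u.npos
  have htwo := h.u.two
  obtain ⟨k, h1, h2⟩ := exists_window hn s x
  obtain ⟨j, h3, h4⟩ := h.wr _ _ (h.w.shift_mul k hx) h1 h2
  have := mul_trich h.u.Npos j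
  omega

/-- The part of `0` in the complement is not `{0}`: otherwise the whole window would lie in the
part of `0` of the original partition, which would then be long. -/
theorem exists_zw (h : AsymCompl n N s Ru Zu Rw Zw) : ∃ z, s < z ∧ z ≤ s + n ∧ Zw z := by
  by_contra! hz
  have hn := h.u.npos
  have : Zu (s + n) := by
    rw [h.k0' (s + n) (by omega) le_rfl]
    exact fun a h1 h2 => ⟨hz a h1 h2, fun b _ h3 _ => h3⟩
  exact h.unl s (h.u.zz h.zs this)

theorem exists_zs_close (h : AsymCompl n N s Ru Zu Rw Zw) {x : ℤ} (hx : Zu x) :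
    ∃ k : ℤ, Ru s (x + k * N) ∧ x + k * N < s + n ∧ s < x + k * N + n :=
  h.u.exists_close h.unl (h.u.zz h.zs hx)

/-- A point of the window lying in a rotate of the part of `0` is either in the part of `0` or
in the part of `ζ_N^(s + n)`. -/
theorem T_cases (h : AsymCompl n N s Ru Zu Rw Zw) {z k : ℤ} (hz : Zu (z + k * n)) (h1 : s < z)
    (h2 : z ≤ s + n) : Zu z ∨ Ru z (s + n) := by
  obtain ⟨j, h3, h4, h5⟩ := h.exists_zs_close hz
  obtain ⟨e, he⟩ := h.u.dvd
  have hn := h.u.npos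
  have e1 : z + k * n + j * N = z + (k + j * e) * n := by rw [he]; ring
  have hz2 := (h.u.zper j).2 hz
  rw [e1] at h3 h4 h5 hz2
  have hk := mul_trich hn (k + j * e)
  have hk' : (k + j * e) * n = 0 ∨ (k + j * e) * n = -n ∨ ((k + j * e) * n = -(2 * n) ∧ z = s + n)
    := by omega
  rcases hk' with hk | hk | ⟨hk, h6⟩
  · rw [hk] at hz2
    left; simpa using hz2
  · rw [hk] at h3
    right
    have := h.u.shift h3
    apply h.u.symm
    convert this using 1; ring
  · right
    rw [h6]; exact h.u.refl _

/-- Non-crossing with the rotates of the segment from `0` to `ζ_N^s`. -/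
theorem nest (h : AsymCompl n N s Ru Zu Rw Zw) {x y : ℤ} (k : ℤ) (hR : Ru x y)
    (h1 : x ≤ s + k * n) (h2 : s + k * n ≤ y) (h3 : y < x + n) :
    Ru x (s + k * n) := by
  rcases h1.eq_or_lt with h1 | h1
  · rw [h1]; exact h.u.refl _
  rcases h2.eq_or_lt with h2 | h2
  · rw [h2]; exact hR
  have h4 := h.u.shift_mul (-k) hR
  have h5 := h.u.znc (t := s) (by linarith) (by linarith) (by linarith) h4 h.zs
  have := h.u.shift_mul k (h.u.zz h5 h.zs)
  convert this using 1; ring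

/-- Inside the window, saturation can be tested on the points of the window alone. This is where
the intrinsic condition `SatS` is matched with the condition depending on `s`. -/
theorem satS_window (h : AsymCompl n N s Ru Zu Rw Zw) {x y : ℤ} (h1 : s < x) (h2 : x < y)
    (h3 : y ≤ s + n) : SatS n Ru Zu x y ↔ ∀ a, x ≤ a → a < y → ¬ Zu a ∧
    ∀ b, s < b → b ≤ s + n → Ru a b → x ≤ b ∧ b < y := by
  have hn := h.u.npos
  constructor
  · intro hs a c1 c2
    obtain ⟨h4, h5⟩ := hs a c1 c2
    refine ⟨by simpa using h4 0, fun b c3 c4 c5 => ?_⟩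
    exact h5 b c5 (by omega) (by omega)
  · intro hl z c1 c2
    obtain ⟨h4, h5⟩ := hl z c1 c2
    have hT : ∀ k : ℤ, ¬ Zu (z + k * n) := by
      intro k hk
      rcases h.T_cases hk (by omega) (by omega) with h6 | h6
      · exact h4 h6
      · have := h5 (s + n) (by omega) le_rfl h6
        omega
    refine ⟨hT, fun z' c3 c4 c5 => ?_⟩
    by_cases d1 : s < z'
    · by_cases d2 : z' ≤ s + n
      · exact h5 z' d1 d2 c3
      · have h6 := h.u.shift_neg (h.nest 1 c3 (by omega) (by omega) c4)
        have h7 : Zu (z - n) := h.u.zr h.zs (h.u.symm (by simpa using h6))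
        exact absurd h7 (by simpa [sub_eq_add_neg] using hT (-1))
    · have := h.nest 0 (h.u.symm c3) (by omega) (by omega) c5
      have h7 : Zu z' := h.u.zr h.zs (h.u.symm (by simpa using this))
      exact absurd (h.u.zr h7 (h.u.symm c3)) h4

/-- Points at distance less than `n` are related in the complement iff the interval between
them is saturated and avoids the rotates of the part of `0`. -/
theorem w_close_iff (h : AsymCompl n N s Ru Zu Rw Zw) {x y : ℤ} (h1 : x < y) (h2 : y < x + n) :
    Rw x y ↔ SatS n Ru Zu x y := by
  have hn := h.u.npos
  have htwo := h.u.two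
  obtain ⟨k, h3, h4⟩ := exists_window hn s x
  rw [← h.w.shift_iff k, ← h.u.satS_shift k]
  generalize e1 : x + k * n = x' at *
  generalize e2 : y + k * n = y' at *
  by_cases hy : y' ≤ s + n
  · rw [h.satS_window h3 (by omega) hy, h.k1 _ _ h3 (by omega) hy]
  · constructor
    · intro hR
      obtain ⟨j, h5, h6⟩ := h.wr _ _ hR h3 h4
      have := mul_trich h.u.Npos j
      omega
    · intro hS
      exact absurd (by simpa using h.zs) ((hS (s + n) (by omega) (by omega)).1 (-1))

theorem w_zero_window (h : AsymCompl n N s Ru Zu Rw Zw) {y : ℤ} (h1 : s < y) (h2 : y ≤ s + n) :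
    Zw y ↔ SatZ n Ru Zu y := by
  have hn := h.u.npos
  rw [h.k0 y h1 h2]
  constructor
  · rintro ⟨hA, hB⟩
    refine ⟨⟨s, by omega, h1, h.zs⟩, fun z z' hR c1 c2 c3 c4 => ?_⟩
    by_contra! hc
    by_cases d1 : y ≤ z'
    · rcases lt_trichotomy z s with d2 | d2 | d2
      · have := h.nest 0 hR (by omega) (by omega) c1
        have h7 : Zu z := h.u.zr h.zs (h.u.symm (by simpa using this))
        exact hA z' d1 (by omega) (h.u.zr h7 hR)
      · exact hA z' d1 (by omega) (h.u.zr (d2 ▸ h.zs) hR)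
      · by_cases d3 : z' ≤ s + n
        · exact hB z z' d2 c4 d1 d3 hR
        · have := h.nest 1 hR (by omega) (by omega) c1
          exact hB z (s + n) d2 c4 h2 le_rfl (by simpa using this)
    · have d1' : z' < y - n := by
        by_contra! h'
        have := hc h'
        omega
      by_cases d2 : s < z
      · have h6 := h.nest 0 (h.u.symm hR) (by omega) (by omega) c2
        have := h.u.shift h6
        exact hB (z' + n) (s + n) (by omega) (by omega) h2 le_rfl (by simpa using this)
      · by_cases d3 : s < z' + n
        · exact hB (z' + n) (z + n) d3 (by omega) (by omega) (by omega) (h.u.shift (h.u.symm hR))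
        · have h6 := h.nest 0 (h.u.shift (h.u.symm hR)) (by omega) (by omega) (by omega)
          have h7 : Zu (z' + n) := h.u.zr h.zs (h.u.symm (by simpa using h6))
          exact hA (z + n) (by omega) (by omega) (h.u.zr h7 (h.u.shift (h.u.symm hR)))
  · rintro ⟨⟨z, h3, h4, h5⟩, hS⟩
    constructor
    · intro b c1 c2 c3
      rcases c2.eq_or_lt with c2 | c2
      · exact h.unl s (c2 ▸ h.u.zz h.zs c3)
      · have := hS s b (h.u.zz h.zs c3) (by omega) (by omega) (by omega) (by omega)
        omega
    · intro a b c1 c2 c3 c4 c5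
      have := hS a b c5 (by omega) (by omega) (by omega) (by omega)
      omega

/-- Description of the part of `0` in the complement, independent of `s`. -/
theorem w_zero_iff (h : AsymCompl n N s Ru Zu Rw Zw) (y : ℤ) : Zw y ↔ SatZ n Ru Zu y := by
  have hn := h.u.npos
  have key : ∀ k : ℤ, s < y + k * N → y + k * N ≤ s + n → (Zw y ↔ SatZ n Ru Zu y) := by
    intro k h1 h2
    rw [← h.w.zper k, ← h.u.satZ_per k]
    exact h.w_zero_window h1 h2
  constructor
  · intro hy
    obtain ⟨k, h1, h2⟩ := h.wz y hy
    exact (key k h1 h2).1 hy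
  · intro hy
    obtain ⟨⟨z, h3, h4, h5⟩, hS⟩ := id hy
    obtain ⟨k, c1, c2, c3⟩ := h.u.exists_close h.unl (h.u.zz h5 h.zs)
    have := hS z _ c1 c2 c3 h3 h4
    have e1 : -k * N = -(k * N) := by ring
    exact (key (-k) (by omega) (by omega)).2 hy

/-- The parts of the complement do not straddle the points `s + n k | s + n k + 1`. -/
theorem wr_close (h : AsymCompl n N s Ru Zu Rw Zw) {a b : ℤ} (k : ℤ) (hR : Rw a b)
    (h1 : s + k * n < a) (h2 : a ≤ s + k * n + n) (h3 : b < a + n) (h4 : a < b + n) :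
    s + k * n < b ∧ b ≤ s + k * n + n := by
  have htwo := h.u.two
  have e : -k * n = -(k * n) := by ring
  obtain ⟨j, h5, h6⟩ := h.wr _ _ (h.w.shift_mul (-k) hR) (by omega) (by omega)
  have := mul_trich h.u.Npos j
  omega

/-- Within the window, a point lying in a rotate of the part of `0` of the complement lies in that
part itself, because that part is contained in the window. -/
theorem zw_window (h : AsymCompl n N s Ru Zu Rw Zw) {a k : ℤ} (hz : Zw (a + k * n)) (h1 : s < a)
    (h2 : a ≤ s + n) : Zw a := by
  obtain ⟨j, h3, h4⟩ := h.wz _ hz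
  obtain ⟨e, he⟩ := h.u.dvd
  have hn := h.u.npos
  have e1 : a + k * n + j * N = a + (k + j * e) * n := by rw [he]; ring
  have hz2 := (h.w.zper j).2 hz
  rw [e1] at h3 h4 hz2
  have hk := mul_trich hn (k + j * e)
  have : (k + j * e) * n = 0 := by omega
  rw [this] at hz2
  simpa using hz2

theorem satS_w_window (h : AsymCompl n N s Ru Zu Rw Zw) {x y : ℤ} (h1 : s ≤ x)
    (h3 : y ≤ s + n) : SatS n Rw Zw (x + 1) (y + 1) ↔ ∀ a, x < a → a ≤ y → ¬ Zw a ∧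
    ∀ b, s < b → b ≤ s + n → Rw a b → x < b ∧ b ≤ y := by
  have hn := h.u.npos
  constructor
  · intro hs a c1 c2
    obtain ⟨h4, h5⟩ := hs a (by omega) (by omega)
    refine ⟨by simpa using h4 0, fun b c3 c4 c5 => ?_⟩
    have := h5 b c5 (by omega) (by omega)
    omega
  · intro hl z c1 c2
    obtain ⟨h4, h5⟩ := hl z (by omega) (by omega)
    refine ⟨fun k hk => h4 (h.zw_window hk (by omega) (by omega)), fun z' c3 c4 c5 => ?_⟩
    have := h.wr_close 0 c3 (by omega) (by omega) c4 c5
    have := h5 z' (by omega) (by omega) c3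
    omega

theorem zu_satS (h : AsymCompl n N s Ru Zu Rw Zw) {y : ℤ} (h1 : s < y) (h2 : y ≤ s + n) :
    Zu y ↔ SatS n Rw Zw (s + 1) (y + 1) := by
  rw [h.satS_w_window le_rfl h2, h.k0' y h1 h2]
  refine forall_congr' fun a => forall_congr' fun c1 => forall_congr' fun c2 => ?_
  refine and_congr_right fun _ => forall_congr' fun b => forall_congr' fun c3 =>
    forall_congr' fun c4 => forall_congr' fun c5 => ?_
  simp [c3]

theorem ru_satS (h : AsymCompl n N s Ru Zu Rw Zw) {x y : ℤ} (h1 : s < x) (h2 : x < y)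
    (h3 : y ≤ s + n) : Ru x y ↔ SatS n Rw Zw (x + 1) (y + 1) := by
  rw [h.satS_w_window h1.le h3, h.k1' x y h1 h2 h3]

/-- Points at distance less than `n` are related iff the interval between them is saturated for
the complement. -/
theorem u_close_iff (h : AsymCompl n N s Ru Zu Rw Zw) {x y : ℤ} (h1 : x < y) (h2 : y < x + n) :
    Ru x y ↔ SatS n Rw Zw (x + 1) (y + 1) := by
  have hn := h.u.npos
  have htwo := h.u.two
  obtain ⟨k, h3, h4⟩ := exists_window hn s x
  rw [← h.u.shift_iff k, ← h.w.satS_shift k]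
  have e1 : x + 1 + k * n = x + k * n + 1 := by ring
  have e2 : y + 1 + k * n = y + k * n + 1 := by ring
  rw [e1, e2]
  have h5 : x + k * n < y + k * n := by omega
  have h6 : y + k * n < x + k * n + n := by omega
  generalize x + k * n = x' at *
  generalize y + k * n = y' at *
  by_cases hy : y' ≤ s + n
  · exact h.ru_satS h3 h5 hy
  -- the interval straddles `s + n`: cut it there
  have hz : Ru (s + n) y' ↔ SatS n Rw Zw (s + n + 1) (y' + 1) := by
    have hs := h.w.satS_shift (x := s + 1) (y := y' - n + 1) 1
    rw [← h.zu_satS (y := y' - n) (by omega) (by omega)] at hs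
    have e3 : s + 1 + 1 * n = s + n + 1 := by ring
    have e4 : y' - n + 1 + 1 * n = y' + 1 := by ring
    rw [e3, e4] at hs
    rw [hs]
    constructor
    · intro hR
      have := h.u.shift_neg hR
      exact h.u.zr h.zs (by simpa using this)
    · intro hR
      have := h.u.shift (h.u.zz h.zs hR)
      simpa using this
  have hx : Ru x' (s + n) ↔ (x' = s + n ∨ SatS n Rw Zw (x' + 1) (s + n + 1)) := by
    rcases h4.eq_or_lt with h4 | h4
    · simp [h4, h.u.refl]
    · rw [h.ru_satS h3 h4 le_rfl]
      simp [h4.ne]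
  have hxy : Ru x' y' ↔ Ru x' (s + n) ∧ Ru (s + n) y' := by
    constructor
    · intro hR
      have h7 := h.nest 1 hR (by omega) (by omega) h6
      rw [one_mul] at h7
      exact ⟨h7, h.u.trans (h.u.symm h7) hR⟩
    · exact fun h' => h.u.trans h'.1 h'.2
  rw [hxy, hz, hx]
  constructor
  · rintro ⟨rfl | h7, h8⟩
    · exact h8
    · exact NCData.satS_union h7 h8 (by omega) (by omega)
  · intro hS
    constructor
    · by_cases c : x' = s + n
      · exact Or.inl c
      right
      intro z c1 c2
      obtain ⟨h7, h8⟩ := hS z (by omega) (by omega)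
      refine ⟨h7, fun z' c3 c4 c5 => ?_⟩
      have := h8 z' c3 c4 c5
      have := h.wr_close 0 c3 (by omega) (by omega) c4 c5
      omega
    · intro z c1 c2
      obtain ⟨h7, h8⟩ := hS z (by omega) (by omega)
      refine ⟨h7, fun z' c3 c4 c5 => ?_⟩
      have := h8 z' c3 c4 c5
      have := h.wr_close 1 c3 (by omega) (by omega) c4 c5
      omega

theorem u_zero_close (h : AsymCompl n N s Ru Zu Rw Zw) {x : ℤ} (h1 : s < x + n) (h2 : x < s + n) :
    Ru s x ↔ SatZ n Rw Zw (x + n + 1) := by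
  have hn := h.u.npos
  have htwo := h.u.two
  obtain ⟨z0, z1, z2, hz0⟩ := h.exists_zw
  have hzz : ∀ z, Zw z → s - n < z → z < s + 2 * n → s < z ∧ z ≤ s + n := by
    intro z hz c1 c2
    obtain ⟨j, h3, h4⟩ := h.wz _ hz
    have := mul_trich h.u.Npos j
    omega
  rcases lt_trichotomy s x with hx | hx | hx
  · rw [h.u_close_iff hx h2]
    constructor
    · intro hS
      refine ⟨⟨z0, ?_, by omega, hz0⟩, fun z z' hR c1 c2 c3 c4 => ?_⟩
      · by_contra! hc
        exact (hS z0 (by omega) (by omega)).1 0 (by simpa using hz0)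
      · by_cases d1 : z ≤ s + n
        · have := h.wr_close 0 hR (by omega) (by omega) c1 c2
          by_contra! hc
          have := (hS z' (by omega) (by omega)).2 z (h.w.symm hR) c2 c1
          omega
        · have := (hS (z - n) (by omega) (by omega)).2 (z' - n) (h.w.shift_neg hR)
            (by omega) (by omega)
          omega
    · rintro ⟨⟨z3, c1, c2, hz3⟩, hS⟩ z c3 c4
      have c5 := hzz z3 hz3 (by omega) (by omega)
      constructor
      · intro k hk
        have h6 := h.zw_window hk (by omega) (by omega)
        have := hS z3 z (h.w.zz hz3 h6) (by omega) (by omega) (by omega) (by omega)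
        omega
      · intro z' hR d1 d2
        have := h.wr_close 0 hR (by omega) (by omega) d1 d2
        by_contra! hc
        have := hS z' z (h.w.symm hR) (by omega) (by omega) (by omega) (by omega)
        omega
  · subst hx
    refine iff_of_true (h.u.refl _) ⟨⟨z0, by omega, by omega, hz0⟩, fun z z' hR c1 c2 c3 c4 => ?_⟩
    have := h.wr_close 0 hR (by omega) (by omega) c1 c2
    omega
  · have hsym : Ru s x ↔ Ru x s := ⟨h.u.symm, h.u.symm⟩
    rw [hsym, h.u_close_iff hx h1]
    constructor
    · intro hS
      refine ⟨⟨z0, by omega, ?_, hz0⟩, fun z z' hR c1 c2 c3 c4 => ?_⟩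
      · by_contra! hc
        exact (hS (z0 - n) (by omega) (by omega)).1 1 (by simpa using hz0)
      · by_cases d1 : s < z
        · have := h.wr_close 0 hR (by omega) (by omega) c1 c2
          by_contra! hc
          have := (hS (z' - n) (by omega) (by omega)).2 (z - n)
            (h.w.shift_neg (h.w.symm hR)) (by omega) (by omega)
          omega
        · have := (hS z (by omega) (by omega)).2 z' hR c1 c2
          omega
    · rintro ⟨⟨z3, c1, c2, hz3⟩, hS⟩ z c3 c4
      have c5 := hzz z3 hz3 (by omega) (by omega)
      constructor
      · intro k hk
        have h6 : Zw (z + n) := h.zw_window (k := k - 1) (by convert hk using 1; ring)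
          (by omega) (by omega)
        have := hS z3 (z + n) (h.w.zz hz3 h6) (by omega) (by omega) (by omega) (by omega)
        omega
      · intro z' hR d1 d2
        have := h.wr_close (-1) hR (by omega) (by omega) d1 d2
        by_contra! hc
        have := hS (z' + n) (z + n) (h.w.shift (h.w.symm hR)) (by omega) (by omega) (by omega)
          (by omega)
        omega

/-- The part of `0` is recovered from the complement. Compared with `w_zero_iff` there is a
translation by `n + 1`, which is the origin of the rotation by `ζ_{en}^(n+1)`. -/
theorem u_zero_iff (h : AsymCompl n N s Ru Zu Rw Zw) (x : ℤ) :
    Zu x ↔ SatZ n Rw Zw (x + n + 1) := by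
  have hn := h.u.npos
  have key : ∀ k : ℤ, s < x + k * N + n → x + k * N < s + n →
      (Zu x ↔ SatZ n Rw Zw (x + n + 1)) := by
    intro k h1 h2
    rw [← h.u.zper k, ← h.w.satZ_per k]
    have e1 : x + n + 1 + k * N = x + k * N + n + 1 := by ring
    rw [e1, ← h.u_zero_close h1 h2]
    exact ⟨fun hz => h.u.zz h.zs hz, fun hR => h.u.zr h.zs hR⟩
  constructor
  · intro hx
    obtain ⟨k, h1, h2, h3⟩ := h.exists_zs_close hx
    exact (key k h3 h2).1 hx
  · intro hx
    obtain ⟨⟨z, h1, h2, h3⟩, -⟩ := id hx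
    obtain ⟨k, h4, h5⟩ := h.wz z h3
    exact (key k (by omega) (by omega)).2 hx

end AsymCompl

/-! ### Convex position and roots of unity -/

/-- Twice the signed area of the triangle `a b c`. -/
def orient (a b c : ℂ) : ℝ := (b - a).re * (c - a).im - (b - a).im * (c - a).re

theorem orient_rot (a b c : ℂ) : orient b c a = orient a b c := by
  simp only [orient, Complex.sub_re, Complex.sub_im]; ring

theorem orient_swap (a b c : ℂ) : orient a c b = -orient a b c := by
  simp only [orient, Complex.sub_re, Complex.sub_im]; ring

/-- The diagonals of a convex quadrilateral meet. -/
theorem diag_meet {a b c d : ℂ} (h1 : 0 < orient a b c) (h2 : 0 < orient a c d)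
    (h3 : 0 < orient a b d) (h4 : 0 < orient b c d) : (segment ℝ a c ∩ segment ℝ b d).Nonempty := by
  have hD : orient a b d + orient b c d = orient a b c + orient a c d := by
    simp only [orient, Complex.sub_re, Complex.sub_im]; ring
  have hD0 : orient a b d + orient b c d ≠ 0 := by positivity
  have hD1 : orient a b c + orient a c d ≠ 0 := by positivity
  refine ⟨(orient b c d / (orient a b d + orient b c d)) • a +
    (orient a b d / (orient a b d + orient b c d)) • c,
    ⟨_, _, by positivity, by positivity, by field_simp; ring, rfl⟩,
    ⟨orient a c d / (orient a b c + orient a c d), orient a b c / (orient a b c + orient a c d),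
      by positivity, by positivity, by field_simp; ring, ?_⟩⟩
  rw [← hD]
  apply Complex.ext
  · simp only [Complex.add_re, Complex.smul_re, smul_eq_mul]
    field_simp
    simp only [orient, Complex.sub_re, Complex.sub_im]; ring
  · simp only [Complex.add_im, Complex.smul_im, smul_eq_mul]
    field_simp
    simp only [orient, Complex.sub_re, Complex.sub_im]; ring

/-- In a non-crossing partition, parts containing opposite vertices of a convex quadrilateral
are equal. -/
theorem eq_of_cross {u : Set (Set ℂ)} (hu : IsNoncrossing u) {A B : Set ℂ} (hA : A ∈ u)
    (hB : B ∈ u) {a b c d : ℂ} (h1 : 0 < orient a b c) (h2 : 0 < orient a c d)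
    (h3 : 0 < orient a b d) (h4 : 0 < orient b c d) (ha : a ∈ A) (hb : b ∈ B) (hc : c ∈ A)
    (hd : d ∈ B) : A = B := by
  obtain ⟨t, h5, h6⟩ := diag_meet h1 h2 h3 h4
  exact hu A hA B hB ⟨t, segment_subset_convexHull ha hc h5, segment_subset_convexHull hb hd h6⟩

/-- `x` and `y` lie in a common part of `u`. -/
def SB (u : Set (Set ℂ)) (x y : ℂ) : Prop := ∃ b ∈ u, x ∈ b ∧ y ∈ b

theorem SB.symm {u : Set (Set ℂ)} {x y : ℂ} (h : SB u x y) : SB u y x := by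
  obtain ⟨b, h1, h2, h3⟩ := h
  exact ⟨b, h1, h3, h2⟩

namespace IsPartitionOf

variable {Y : Set ℂ} {u v : Set (Set ℂ)}

theorem eq (hu : IsPartitionOf Y u) {A B : Set ℂ} (hA : A ∈ u) (hB : B ∈ u) {z : ℂ} (h1 : z ∈ A)
    (h2 : z ∈ B) : A = B :=
  (hu.2 z ((hu.1 A hA).2 h1)).unique ⟨hA, h1⟩ ⟨hB, h2⟩

theorem sb_refl (hu : IsPartitionOf Y u) {z : ℂ} (h : z ∈ Y) : SB u z z := by
  obtain ⟨b, ⟨h1, h2⟩, -⟩ := hu.2 z h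
  exact ⟨b, h1, h2, h2⟩

theorem sb_trans (hu : IsPartitionOf Y u) {x y z : ℂ} (h1 : SB u x y) (h2 : SB u y z) :
    SB u x z := by
  obtain ⟨b, h3, h4, h5⟩ := h1
  obtain ⟨c, h6, h7, h8⟩ := h2
  obtain rfl := hu.eq h3 h6 h5 h7
  exact ⟨b, h3, h4, h8⟩

theorem refines_iff (hu : IsPartitionOf Y u) (hv : IsPartitionOf Y v) :
    Refines u v ↔ ∀ x ∈ Y, ∀ y ∈ Y, SB u x y → SB v x y := by
  constructor
  · rintro h x - y - ⟨b, h1, h2, h3⟩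
    obtain ⟨c, h4, h5⟩ := h b h1
    exact ⟨c, h4, h5 h2, h5 h3⟩
  · intro h a ha
    obtain ⟨⟨z, hz⟩, haY⟩ := hu.1 a ha
    obtain ⟨b, ⟨h1, h2⟩, -⟩ := hv.2 z (haY hz)
    refine ⟨b, h1, fun y hy => ?_⟩
    obtain ⟨c, h3, h4, h5⟩ := h z (haY hz) y (haY hy) ⟨a, ha, hz, hy⟩
    rwa [hv.eq h1 h3 h2 h4]

theorem subset_of_refines (hu : IsPartitionOf Y u) (h1 : Refines u v)
    (h2 : Refines v u) : u ⊆ v := by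
  intro a ha
  obtain ⟨b, hb, hab⟩ := h1 a ha
  obtain ⟨c, hc, hbc⟩ := h2 b hb
  obtain ⟨z, hz⟩ := (hu.1 a ha).1
  obtain rfl := hu.eq ha hc hz (hbc (hab hz))
  rwa [hab.antisymm hbc]

theorem resTo (hu : IsPartitionOf Y u) {X : Set ℂ} (hX : X ⊆ Y) : IsPartitionOf X (resTo X u) := by
  constructor
  · rintro s ⟨h1, a, ha, rfl⟩
    exact ⟨h1, inter_subset_right⟩
  · intro z hz
    obtain ⟨b, ⟨h1, h2⟩, -⟩ := hu.2 z (hX hz)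
    refine ⟨b ∩ X, ⟨⟨⟨z, h2, hz⟩, b, h1, rfl⟩, h2, hz⟩, ?_⟩
    rintro s ⟨⟨-, a, ha, rfl⟩, h3⟩
    rw [hu.eq ha h1 h3.1 h2]

end IsPartitionOf

theorem sb_resTo {u : Set (Set ℂ)} {X : Set ℂ} {x y : ℂ} (hx : x ∈ X) (hy : y ∈ X) :
    SB (resTo X u) x y ↔ SB u x y := by
  constructor
  · rintro ⟨s, ⟨-, a, ha, rfl⟩, h1, h2⟩
    exact ⟨a, ha, h1.1, h2.1⟩
  · rintro ⟨a, ha, h1, h2⟩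
    exact ⟨a ∩ X, ⟨⟨x, h1, hx⟩, a, ha, rfl⟩, ⟨h1, hx⟩, ⟨h2, hy⟩⟩

/-- The points `p 0, p 1, …` are the vertices of a convex polygon, in counterclockwise order. -/
structure ConvexPos {m : ℕ} (p : Fin m → ℂ) : Prop where
  inj : Function.Injective p
  pos : ∀ i j k, i < j → j < k → 0 < orient (p i) (p j) (p k)

namespace ConvexPos

variable {m : ℕ} {p : Fin m → ℂ}

/-- The orientation of a triangle of vertices only depends on their cyclic order. -/
theorem cyc_pos (hp : ConvexPos p) {i j k : Fin m} (h1 : j ≠ i) (h2 : cd i j < cd i k) :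
    0 < orient (p i) (p j) (p k) := by
  have e1 : j.val ≠ i.val := fun h => h1 (Fin.ext h)
  have b1 := i.isLt
  have b2 := j.isLt
  have b3 := k.isLt
  have : (i.val < j.val ∧ j.val < k.val) ∨ (j.val < k.val ∧ k.val < i.val) ∨
      (k.val < i.val ∧ i.val < j.val) := by
    unfold cd at h2
    split_ifs at h2 <;> omega
  rcases this with h | h | h
  · exact hp.pos _ _ _ h.1 h.2
  · rw [← orient_rot]; exact hp.pos _ _ _ h.1 h.2
  · rw [← orient_rot, ← orient_rot]; exact hp.pos _ _ _ h.1 h.2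

/-- For a partition of the vertices of a convex polygon, a geometric successor map is the cyclic
successor map on indices. -/
theorem exists_succ (hp : ConvexPos p) {v : Set (Set ℂ)} (hv : IsPartitionOf (range p) v)
    {σ : ℂ → ℂ} (hσ : IsSuccMapOn v σ) :
    ∃ s : Fin m → Fin m, (∀ i, p (s i) = σ (p i)) ∧ IsSucc (fun i j => SB v (p i) (p j)) s := by
  have hmem : ∀ i, ∃ b ∈ v, p i ∈ b ∧ σ (p i) ∈ b := by
    intro i
    obtain ⟨b, ⟨h1, h2⟩, -⟩ := hv.2 (p i) ⟨i, rfl⟩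
    refine ⟨b, h1, h2, ?_⟩
    by_cases hb : b = {p i}
    · rw [(hσ b h1 _ h2).1 hb]; exact h2
    · exact ((hσ b h1 _ h2).2 hb).2.1
  have hex : ∀ i, ∃ j, p j = σ (p i) := by
    intro i
    obtain ⟨b, h1, h2, h3⟩ := hmem i
    exact (hv.1 b h1).2 h3
  choose s hs using hex
  refine ⟨s, hs, ⟨fun i => hv.sb_refl ⟨i, rfl⟩, fun h => h.symm, fun h h' => hv.sb_trans h h'⟩,
    fun i => ?_, fun i k hik hne => ?_⟩
  · simp only [hs]; exact hmem i
  · obtain ⟨b, h1, h2, h3⟩ := hik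
    have hb : b ≠ {p i} := by
      rintro rfl
      exact hne (hp.inj h3)
    obtain ⟨-, c1, c2, c3⟩ := (hσ b h1 _ h2).2 hb
    have hsi : s i ≠ i := by
      intro h
      rw [← hs, h] at c2
      exact c2 rfl
    refine ⟨hsi, ?_⟩
    by_contra! hlt
    have h4 := hp.cyc_pos hne hlt
    have h5 : 0 < orient (p i) (σ (p i)) (p k) :=
      c3 (p k) h3 (fun h => hne (hp.inj h)) (fun h => by
        rw [← hs] at h
        have := hp.inj h
        rw [this] at hlt
        exact lt_irrefl _ hlt)
    rw [hs, orient_swap] at h4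
    linarith

/-- The successor map of the one-part partition is the rotation by one step. -/
theorem succ_top {U : Fin m → Fin m → Prop} (hU : ∀ i j, U i j) {s : Fin m → Fin m}
    (hs : IsSucc U s) (i : Fin m) : (s i).val = if i.val + 1 < m then i.val + 1 else 0 := by
  have b1 := i.isLt
  set k : Fin m := ⟨if i.val + 1 < m then i.val + 1 else 0, by split_ifs <;> omega⟩ with hk
  have hk' : k.val = if i.val + 1 < m then i.val + 1 else 0 := rfl
  rw [← hk']
  congr 1
  by_cases hki : k = i
  · -- then `m = 1`
    have h0 : k.val = i.val := by rw [hki]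
    have := (s i).isLt
    apply Fin.ext
    split_ifs at hk' <;> omega
  · obtain ⟨h1, h2⟩ := hs.gap i k (hU i k) hki
    have h3 : k.val ≠ i.val := fun h => hki (Fin.ext h)
    have h4 : (s i).val ≠ i.val := fun h => h1 (Fin.ext h)
    have := (s i).isLt
    apply cd_inj (i := i)
    unfold cd at *
    split_ifs at * <;> omega

/-- The relation `σ_u σ_w = σ_v` with `v` the one-part partition, transported to indices. -/
theorem isKrew (hp : ConvexPos p) {Y : Set ℂ} {u w : Set (Set ℂ)} (hu : IsPartitionOf Y u)
    (hw : IsPartitionOf Y w) (ncw : IsNoncrossing w) (hX : range p ⊆ Y)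
    (h : KrewRel (range p) (resTo (range p) u) {range p} (resTo (range p) w)) :
    ∃ su sw, IsKrew (fun i j => SB u (p i) (p j)) (fun i j => SB w (p i) (p j)) su sw := by
  obtain ⟨-, -, σu, σv, σw, h1, h2, h3, h4⟩ := h
  obtain ⟨su, hsu, ku⟩ := hp.exists_succ (hu.resTo hX) h1
  obtain ⟨sw, hsw, kw⟩ := hp.exists_succ (hw.resTo hX) h3
  have hsb : ∀ u i j, SB (_root_.resTo (range p) u) (p i) (p j) ↔ SB u (p i) (p j) :=
    fun u i j => sb_resTo ⟨i, rfl⟩ ⟨j, rfl⟩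
  simp only [hsb] at ku kw
  refine ⟨su, sw, ku, kw, ?_, fun i => ?_⟩
  · rintro a b c d hab hbc hcd ⟨A, hA, a1, a2⟩ ⟨B, hB, b1, b2⟩
    obtain rfl := eq_of_cross ncw hA hB (hp.pos _ _ _ hab hbc) (hp.pos _ _ _ (hab.trans hbc) hcd)
      (hp.pos _ _ _ hab (hbc.trans hcd)) (hp.pos _ _ _ hbc hcd) a1 b1 a2 b2
    exact ⟨A, hA, a1, b1⟩
  · have hv : IsPartitionOf (range p) {range p} := by
      constructor
      · rintro a rfl
        exact ⟨⟨p i, i, rfl⟩, Subset.rfl⟩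
      · exact fun z hz => ⟨range p, ⟨rfl, hz⟩, fun y hy => hy.1⟩
    obtain ⟨sv, hsv, kv⟩ := hp.exists_succ hv h2
    have htop := succ_top (fun i j => ⟨range p, rfl, ⟨i, rfl⟩, ⟨j, rfl⟩⟩) kv i
    rw [← htop]
    congr 1
    apply hp.inj
    rw [hsw, hsu, hsv, h4 _ ⟨i, rfl⟩]

end ConvexPos

/-- The point `ζ_N^x`. -/
def Pt (N : ℕ) (x : ℤ) : ℂ := zeta N ^ x

section Pt

variable {N : ℕ}

theorem zeta_prim (hN : 0 < N) : IsPrimitiveRoot (zeta N) N :=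
  Complex.isPrimitiveRoot_exp N hN.ne'

theorem zeta_ne (N : ℕ) : zeta N ≠ 0 := Complex.exp_ne_zero _

theorem Pt_ne (N : ℕ) (x : ℤ) : Pt N x ≠ 0 := zpow_ne_zero _ (zeta_ne N)

theorem Pt_add (N : ℕ) (x y : ℤ) : Pt N (x + y) = Pt N x * Pt N y := zpow_add₀ (zeta_ne N) _ _

theorem Pt_pow (N : ℕ) (x : ℤ) (k : ℕ) : Pt N x ^ k = Pt N (k * x) := by
  rw [Pt, Pt, ← zpow_natCast, ← zpow_mul, mul_comm]

theorem Pt_nat (N k : ℕ) : Pt N k = zeta N ^ k := zpow_natCast _ _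

theorem Pt_eq_one (hN : 0 < N) (x : ℤ) : Pt N x = 1 ↔ (N : ℤ) ∣ x :=
  (zeta_prim hN).zpow_eq_one_iff_dvd x

theorem Pt_eq (hN : 0 < N) (x y : ℤ) : Pt N x = Pt N y ↔ ∃ k : ℤ, y = x + k * N := by
  have h1 : Pt N y = Pt N x * Pt N (y - x) := by rw [← Pt_add]; congr 1; ring
  have h2 : Pt N x = Pt N y ↔ Pt N (y - x) = 1 := by
    rw [h1]
    constructor
    · intro h
      exact mul_left_cancel₀ (Pt_ne N x) (by rw [← h, mul_one])
    · intro h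
      rw [h, mul_one]
  rw [h2, Pt_eq_one hN]
  constructor
  · rintro ⟨k, hk⟩
    exact ⟨k, by linarith⟩
  · rintro ⟨k, hk⟩
    exact ⟨k, by linarith⟩

theorem Pt_per (hN : 0 < N) (x k : ℤ) : Pt N (x + k * N) = Pt N x :=
  ((Pt_eq hN x _).2 ⟨k, rfl⟩).symm

theorem Pt_mem (hN : 0 < N) (x : ℤ) : Pt N x ∈ mu N := by
  change _ = _
  rw [Pt_pow, Pt_eq_one hN]
  exact dvd_mul_right _ _

theorem exists_Pt (hN : 0 < N) {z : ℂ} (hz : z ∈ mu N) : ∃ x, z = Pt N x := by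
  have : NeZero N := ⟨hN.ne'⟩
  obtain ⟨i, -, h⟩ := (zeta_prim hN).eq_pow_of_pow_eq_one hz
  exact ⟨i, by rw [Pt_nat, h]⟩

theorem zero_notMem_mu (hN : 0 < N) : (0 : ℂ) ∉ mu N := by
  simp [mu, hN.ne']

theorem Pt_eq_exp (N : ℕ) (x : ℤ) :
    Pt N x = Complex.exp (((2 * Real.pi * x / N : ℝ) : ℂ) * Complex.I) := by
  rw [Pt, zeta, ← Complex.exp_int_mul]
  congr 1
  push_cast
  ring

theorem Pt_re (N : ℕ) (x : ℤ) : (Pt N x).re = Real.cos (2 * Real.pi * x / N) := by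
  rw [Pt_eq_exp, Complex.exp_ofReal_mul_I_re]

theorem Pt_im (N : ℕ) (x : ℤ) : (Pt N x).im = Real.sin (2 * Real.pi * x / N) := by
  rw [Pt_eq_exp, Complex.exp_ofReal_mul_I_im]

theorem sin_half_pos (hN : 0 < N) {x y : ℤ} (h1 : x < y) (h2 : y < x + N) :
    0 < Real.sin ((2 * Real.pi * y / N - 2 * Real.pi * x / N) / 2) := by
  have hN' : (0 : ℝ) < N := by exact_mod_cast hN
  have h1' : (0 : ℝ) < y - x := by
    have : (x : ℝ) < y := by exact_mod_cast h1
    linarith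
  have h2' : (y - x : ℝ) < N := by
    have : (y : ℝ) < x + N := by exact_mod_cast h2
    linarith
  have e : (2 * Real.pi * y / N - 2 * Real.pi * x / N) / 2 = Real.pi * ((y - x) / N) := by
    field_simp
  rw [e]
  have h3 : ((y : ℝ) - x) / N < 1 := by rwa [div_lt_one hN']
  apply Real.sin_pos_of_pos_of_lt_pi
  · have := Real.pi_pos
    positivity
  · nlinarith [Real.pi_pos]

/-- Roots of unity are in convex position. -/
theorem orient_Pt (hN : 0 < N) {x y z : ℤ} (h1 : x < y) (h2 : y < z) (h3 : z < x + N) :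
    0 < orient (Pt N x) (Pt N y) (Pt N z) := by
  have s1 := sin_half_pos hN h1 (by omega)
  have s2 := sin_half_pos hN h2 (by omega)
  have s3 := sin_half_pos hN (h1.trans h2) h3
  have key : ∀ α β γ : ℝ, (Real.cos β - Real.cos α) * (Real.sin γ - Real.sin α) -
      (Real.sin β - Real.sin α) * (Real.cos γ - Real.cos α) =
      4 * Real.sin ((β - α) / 2) * Real.sin ((γ - β) / 2) * Real.sin ((γ - α) / 2) := by
    intro α β γ
    have e0 : (Real.cos β - Real.cos α) * (Real.sin γ - Real.sin α) -
      (Real.sin β - Real.sin α) * (Real.cos γ - Real.cos α) =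
      Real.sin (β - α) + Real.sin (γ - β) - Real.sin (γ - α) := by
      simp only [Real.sin_sub]; ring
    rw [e0]
    generalize hp : (β - α) / 2 = p
    generalize hq : (γ - β) / 2 = q
    have e1 : β - α = 2 * p := by rw [← hp]; ring
    have e2 : γ - β = 2 * q := by rw [← hq]; ring
    have e3 : γ - α = 2 * p + 2 * q := by rw [← hp, ← hq]; ring
    have e4 : (2 * p + 2 * q) / 2 = p + q := by ring
    rw [e1, e2, e3, e4, Real.sin_add, Real.sin_add, Real.sin_two_mul, Real.sin_two_mul,
      Real.cos_two_mul', Real.cos_two_mul']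
    have c1 := Real.sin_sq_add_cos_sq p
    have c2 := Real.sin_sq_add_cos_sq q
    have c1' : Real.cos p ^ 2 = 1 - Real.sin p ^ 2 := by linarith
    have c2' : Real.cos q ^ 2 = 1 - Real.sin q ^ 2 := by linarith
    rw [c1', c2']
    ring
  simp only [orient, Complex.sub_re, Complex.sub_im, Pt_re, Pt_im, key]
  positivity

/-- The triangle with vertices `0, ζ_N^x, ζ_N^y` is positively oriented when the arc from `x` to
`y` is less than half a turn. -/
theorem orient_zero_Pt (hN : 0 < N) {x y : ℤ} (h1 : x < y) (h2 : 2 * (y - x) < N) :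
    0 < orient 0 (Pt N x) (Pt N y) := by
  have hN' : (0 : ℝ) < N := by exact_mod_cast hN
  have h1' : (0 : ℝ) < y - x := by
    have : (x : ℝ) < y := by exact_mod_cast h1
    linarith
  have h2' : 2 * (y - x : ℝ) < N := by exact_mod_cast h2
  have e : orient 0 (Pt N x) (Pt N y) = Real.sin (Real.pi * (2 * (y - x) / N)) := by
    have : Real.pi * (2 * (y - x) / N) = 2 * Real.pi * y / N - 2 * Real.pi * x / N := by
      field_simp
    rw [this, Real.sin_sub]
    simp only [orient, Complex.sub_re, Complex.sub_im, Pt_re, Pt_im, Complex.zero_re,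
      Complex.zero_im]
    ring
  rw [e]
  have h3 : 2 * ((y : ℝ) - x) / N < 1 := by rwa [div_lt_one hN']
  apply Real.sin_pos_of_pos_of_lt_pi
  · have := Real.pi_pos
    positivity
  · nlinarith [Real.pi_pos]

end Pt

/-! ### Elements of `NCP(e,e,n+1)` as relations on the integers -/

/-- `ζ_N^x` and `ζ_N^y` lie in a common part of `u`. -/
def RelP (N : ℕ) (u : Set (Set ℂ)) (x y : ℤ) : Prop := SB u (Pt N x) (Pt N y)

/-- `ζ_N^x` lies in the part of `0` in `u`. -/
def ZelP (N : ℕ) (u : Set (Set ℂ)) (x : ℤ) : Prop := SB u 0 (Pt N x)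

theorem RelP_per {N : ℕ} (hN : 0 < N) (u : Set (Set ℂ)) (x y k : ℤ) :
    RelP N u x (y + k * N) ↔ RelP N u x y := by
  simp only [RelP, Pt_per hN]

/-- The centroid of a regular polygon with vertices in `S` is in the convex hull of `S`. -/
theorem zero_mem_hull {e : ℕ} (he : 2 ≤ e) {c z : ℂ} (hc : IsPrimitiveRoot c e) {S : Set ℂ}
    (hS : ∀ k : ℕ, c ^ k * z ∈ S) : (0 : ℂ) ∈ convexHull ℝ S := by
  have he' : (e : ℝ) ≠ 0 := by
    have : (0 : ℝ) < e := by exact_mod_cast (by omega : 0 < e)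
    exact this.ne'
  have h1 : ∑ k ∈ Finset.range e, (1 / (e : ℝ)) • (c ^ k * z) ∈ convexHull ℝ S := by
    apply (convex_convexHull ℝ S).sum_mem
    · intro i _
      positivity
    · simp [he']
    · intro i _
      exact subset_convexHull ℝ S (hS i)
  rwa [← Finset.smul_sum, ← Finset.sum_mul, hc.geom_sum_eq_zero (by omega), zero_mul,
    smul_zero] at h1

theorem hull_mul (c : ℂ) (S : Set ℂ) :
    convexHull ℝ ((fun z => c * z) '' S) = (fun z => c * z) '' convexHull ℝ S :=
  ((LinearMap.mulLeft ℝ c).image_convexHull S).symm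

theorem zeta_e_prim {e n : ℕ} (he : 2 ≤ e) (hn : 0 < n) : IsPrimitiveRoot (Pt (e * n) n) e := by
  have h := zeta_prim (N := e * n) (by positivity)
  rw [Pt_nat]
  exact h.pow (by positivity) (mul_comm e n)

namespace NCPee

variable {e n : ℕ} {u v : Set (Set ℂ)}

theorem flat_eq_resTo (he : 2 ≤ e) (hn : 0 < n) (hu : IsPartitionOf (insert 0 (mu (e * n))) u) :
    flatNCP u = resTo (mu (e * n)) u := by
  have hN : 0 < e * n := by positivity
  ext s
  refine and_congr_right fun _ => exists_congr fun a => and_congr_right fun ha => ?_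
  have : a \ {0} = a ∩ mu (e * n) := by
    ext z
    constructor
    · rintro ⟨h1, h2⟩
      exact ⟨h1, ((hu.1 a ha).2 h1).resolve_left h2⟩
    · rintro ⟨h1, h2⟩
      exact ⟨h1, fun h => zero_notMem_mu hN (h ▸ h2)⟩
  rw [this]

theorem rel_flat (he : 2 ≤ e) (hn : 0 < n) (hu : IsPartitionOf (insert 0 (mu (e * n))) u)
    (x y : ℤ) : RelP (e * n) (flatNCP u) x y ↔ RelP (e * n) u x y := by
  have hN : 0 < e * n := by positivity
  rw [flat_eq_resTo he hn hu]
  exact sb_resTo (Pt_mem hN x) (Pt_mem hN y)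

/-- A partition is determined, as far as refinement goes, by the relations `RelP` and `ZelP`. -/
theorem refines_iff (he : 2 ≤ e) (hn : 0 < n) (hu : IsPartitionOf (insert 0 (mu (e * n))) u)
    (hv : IsPartitionOf (insert 0 (mu (e * n))) v) :
    Refines u v ↔ (∀ x y, RelP (e * n) u x y → RelP (e * n) v x y) ∧
      ∀ x, ZelP (e * n) u x → ZelP (e * n) v x := by
  have hN : 0 < e * n := by positivity
  rw [hu.refines_iff hv]
  constructor
  · intro h
    exact ⟨fun x y => h _ (Or.inr (Pt_mem hN x)) _ (Or.inr (Pt_mem hN y)),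
      fun x => h _ (Or.inl rfl) _ (Or.inr (Pt_mem hN x))⟩
  · rintro ⟨h1, h2⟩ a ha b hb hab
    rcases ha with rfl | ha
    · rcases hb with rfl | hb
      · exact hv.sb_refl (Or.inl rfl)
      · obtain ⟨x, rfl⟩ := exists_Pt hN hb
        exact h2 x hab
    · obtain ⟨x, rfl⟩ := exists_Pt hN ha
      rcases hb with rfl | hb
      · exact (h2 x hab.symm).symm
      · obtain ⟨y, rfl⟩ := exists_Pt hN hb
        exact h1 x y hab

theorem eq_of_rel (he : 2 ≤ e) (hn : 0 < n) (hu : IsPartitionOf (insert 0 (mu (e * n))) u)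
    (hv : IsPartitionOf (insert 0 (mu (e * n))) v)
    (h1 : ∀ x y, RelP (e * n) u x y ↔ RelP (e * n) v x y)
    (h2 : ∀ x, ZelP (e * n) u x ↔ ZelP (e * n) v x) : u = v := by
  have h3 : Refines u v := (refines_iff he hn hu hv).2
    ⟨fun x y => (h1 x y).1, fun x => (h2 x).1⟩
  have h4 : Refines v u := (refines_iff he hn hv hu).2
    ⟨fun x y => (h1 x y).2, fun x => (h2 x).2⟩
  exact (hu.subset_of_refines h3 h4).antisymm (hv.subset_of_refines h4 h3)

theorem rel_shift (he : 2 ≤ e) (hn : 0 < n) (hu : u ∈ NCPee e n) {x y : ℤ}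
    (h : RelP (e * n) u x y) : RelP (e * n) u (x + n) (y + n) := by
  obtain ⟨b, hb, h1, h2⟩ := h
  have h3 := hu.2.2 (Pt (e * n) n) (zeta_e_prim he hn).pow_eq_one
  have h4 : (fun z => Pt (e * n) n * z) '' (b \ {0}) ∈ flatNCP u := by
    rw [← h3]
    exact ⟨b \ {0}, ⟨⟨_, h1, Pt_ne _ _⟩, b, hb, rfl⟩, rfl⟩
  obtain ⟨-, b', hb', h5⟩ := h4
  have key : ∀ z, Pt (e * n) z ∈ b → Pt (e * n) (z + n) ∈ b' := by
    intro z hz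
    have : Pt (e * n) (z + n) ∈ b' \ {0} := by
      rw [← h5]
      exact ⟨_, ⟨hz, Pt_ne _ _⟩, by simp only [Pt_add]; ring⟩
    exact this.1
  exact ⟨b', hb', key x h1, key y h2⟩

/-- A part meeting its rotate by `ζ_e` along an orbit contains that whole orbit. -/
theorem part_orbit (he : 2 ≤ e) (hn : 0 < n) (hu : u ∈ NCPee e n) {x : ℤ}
    (h : RelP (e * n) u x (x + n)) : ∃ b ∈ u, ∀ k : ℕ, Pt (e * n) n ^ k * Pt (e * n) x ∈ b := by
  have hN : 0 < e * n := by positivity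
  have hk : ∀ k : ℕ, RelP (e * n) u x (x + k * n) := by
    intro k
    induction k with
    | zero =>
      simp only [Nat.cast_zero, zero_mul, add_zero]
      exact hu.1.sb_refl (Or.inr (Pt_mem hN x))
    | succ k ih =>
      have := hu.1.sb_trans h (rel_shift he hn hu ih)
      have e1 : x + k * n + n = x + (k + 1 : ℕ) * n := by push_cast; ring
      rwa [e1] at this
  obtain ⟨b, hb, h1, -⟩ := h
  refine ⟨b, hb, fun k => ?_⟩
  obtain ⟨b', hb', h3, h4⟩ := hk k
  obtain rfl := hu.1.eq hb hb' h1 h3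
  rw [Pt_pow, ← Pt_add, add_comm]
  exact h4

/-- A part has `0` in its convex hull iff it is `μ_e`-invariant: such a part meets its rotate, and
conversely `0` is the centroid of a `μ_e`-orbit. -/
theorem long_iff (he : 2 ≤ e) (hn : 0 < n) (hu : u ∈ NCPee e n) :
    IsLong (flatNCP u) ↔ ∃ x, RelP (e * n) u x (x + n) := by
  have hN : 0 < e * n := by positivity
  constructor
  · rintro ⟨a, ha, h0⟩
    have h3 := hu.2.2 (Pt (e * n) n) (zeta_e_prim he hn).pow_eq_one
    have h4 : (fun z => Pt (e * n) n * z) '' a ∈ flatNCP u := by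
      rw [← h3]
      exact ⟨a, ha, rfl⟩
    have h0' : (0 : ℂ) ∈ convexHull ℝ ((fun z => Pt (e * n) n * z) '' a) := by
      rw [hull_mul]
      exact ⟨0, h0, mul_zero _⟩
    obtain ⟨⟨z, hz⟩, b, hb, rfl⟩ := ha
    obtain ⟨-, b', hb', h5⟩ := h4
    rw [h5] at h0'
    obtain rfl := hu.2.1 b hb b' hb'
      ⟨0, convexHull_mono sdiff_subset h0, convexHull_mono sdiff_subset h0'⟩
    obtain ⟨x, rfl⟩ := exists_Pt hN (((hu.1.1 b hb).2 hz.1).resolve_left hz.2)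
    have h6 : Pt (e * n) (x + n) ∈ b \ {0} := by
      rw [← h5]
      exact ⟨_, hz, by simp only [Pt_add]; ring⟩
    exact ⟨x, b, hb, hz.1, h6.1⟩
  · rintro ⟨x, hx⟩
    obtain ⟨b, hb, h⟩ := part_orbit he hn hu hx
    have h' : ∀ k : ℕ, Pt (e * n) n ^ k * Pt (e * n) x ∈ b \ {0} :=
      fun k => ⟨h k, mul_ne_zero (pow_ne_zero _ (Pt_ne _ _)) (Pt_ne _ _)⟩
    exact ⟨b \ {0}, ⟨⟨_, h' 0⟩, b, hb, rfl⟩, zero_mem_hull he (zeta_e_prim he hn) h'⟩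

theorem short_iff (he : 2 ≤ e) (hn : 0 < n) (hu : IsPartitionOf (insert 0 (mu (e * n))) u) :
    ({0} : Set ℂ) ∈ u ↔ ∀ x, ¬ ZelP (e * n) u x := by
  have hN : 0 < e * n := by positivity
  constructor
  · rintro h x ⟨b, hb, h1, h2⟩
    obtain rfl := hu.eq h hb rfl h1
    exact Pt_ne _ _ h2
  · intro h
    obtain ⟨b, ⟨h1, h2⟩, -⟩ := hu.2 0 (Or.inl rfl)
    have : b = {0} := by
      ext z
      constructor
      · intro hz
        rcases (hu.1 b h1).2 hz with h3 | h3
        · exact h3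
        · obtain ⟨x, rfl⟩ := exists_Pt hN h3
          exact absurd ⟨b, h1, h2, hz⟩ (h x)
      · rintro rfl
        exact h2
    rwa [← this]

/-- The partition `u` seen through the relations `RelP` and `ZelP`. -/
theorem data (he : 2 ≤ e) (hn : 0 < n) (hu : u ∈ NCPee e n) :
    NCData (n : ℤ) ((e * n : ℕ) : ℤ) (RelP (e * n) u) (ZelP (e * n) u) := by
  have hN : 0 < e * n := by positivity
  have h2 : 2 * n ≤ e * n := Nat.mul_le_mul_right _ he
  refine ⟨by exact_mod_cast hn, by exact_mod_cast h2, ⟨e, by push_cast; ring⟩,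
    fun x => hu.1.sb_refl (Or.inr (Pt_mem hN x)), fun h => h.symm,
    fun h h' => hu.1.sb_trans h h', fun x => ?_, fun h => rel_shift he hn hu h, ?_,
    fun h h' => hu.1.sb_trans h.symm h', fun h h' => hu.1.sb_trans h h', ?_, ?_⟩
  · have := (RelP_per hN u x x 1).2 (hu.1.sb_refl (Or.inr (Pt_mem hN x)))
    rwa [one_mul] at this
  · rintro a b c d h1 h2 h3 h4 ⟨A, hA, a1, a2⟩ ⟨B, hB, b1, b2⟩
    obtain rfl := eq_of_cross hu.2.1 hA hB (orient_Pt hN h1 h2 (by omega))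
      (orient_Pt hN (h1.trans h2) h3 h4) (orient_Pt hN h1 (h2.trans h3) h4)
      (orient_Pt hN h2 h3 (by omega)) a1 b1 a2 b2
    exact ⟨A, hA, a1, b1⟩
  · rintro x t y h1 h3 h4 ⟨B, hB, b1, b2⟩ ⟨A, hA, a1, a2⟩
    obtain rfl := eq_of_cross hu.2.1 hA hB (orient_zero_Pt hN h1 (by omega))
      (orient_zero_Pt hN h3 (by omega)) (orient_zero_Pt hN (h1.trans h3) (by omega))
      (orient_Pt hN h1 h3 (by omega)) a1 b1 a2 b2
    exact ⟨A, hA, a1, b1⟩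
  · intro x hx
    obtain ⟨b, hb, h⟩ := part_orbit he hn hu hx
    obtain ⟨b0, ⟨h3, h4⟩, -⟩ := hu.1.2 0 (Or.inl rfl)
    obtain rfl := hu.2.1 b hb b0 h3
      ⟨0, zero_mem_hull he (zeta_e_prim he hn) h, subset_convexHull ℝ _ h4⟩
    exact ⟨b, hb, h4, by simpa using h 0⟩

theorem symm_iff (he : 2 ≤ e) (hn : 0 < n) (hu : u ∈ NCPee e n) :
    SymmPart u ↔ (∀ x, ¬ ZelP (e * n) u x) ∨ ∃ x, RelP (e * n) u x (x + n) := by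
  rw [SymmPart, short_iff he hn hu.1, long_iff he hn hu]

end NCPee

/-! ### From the definition of the complement to saturated intervals -/

/-- The complement relation between symmetric partitions `(Ru, Zu)` and `(Rw, Zw)`. A partition is
symmetric when the part of `0` is `{0}` (`Z` is empty) or some part is `μ_e`-invariant. -/
structure SymCompl (n N : ℤ) (Ru : ℤ → ℤ → Prop) (Zu : ℤ → Prop) (Rw : ℤ → ℤ → Prop)
    (Zw : ℤ → Prop) : Prop where
  u : NCData n N Ru Zu
  w : NCData n N Rw Zw
  us : (∀ x, ¬ Zu x) ∨ ∃ x, Ru x (x + n)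
  ws : (∀ x, ¬ Zw x) ∨ ∃ x, Rw x (x + n)
  wS : ∀ x y, x < y → y < x + N → (Rw x y ↔ Sat N Ru x y)
  uS : ∀ x y, x < y → y < x + N → (Ru x y ↔ Sat N Rw (x + 1) (y + 1))

/-- The points `ζ_N^x, ζ_N^(x + 1), …, ζ_N^(x + N - 1)`. -/
def ptsA (N : ℕ) (x : ℤ) (i : Fin N) : ℂ := Pt N (x + i.val)

theorem ptsA_convex {N : ℕ} (hN : 0 < N) (x : ℤ) : ConvexPos (ptsA N x) := by
  constructor
  · intro i j h
    obtain ⟨k, hk⟩ := (Pt_eq hN _ _).1 h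
    have h1 := i.isLt
    have h2 := j.isLt
    have := mul_trich (N := N) (by exact_mod_cast hN) k
    apply Fin.ext
    omega
  · intro i j k h1 h2
    have h3 := k.isLt
    rw [Fin.lt_def] at h1 h2
    exact orient_Pt hN (by omega) (by omega) (by omega)

theorem ptsA_range {N : ℕ} (hN : 0 < N) (x : ℤ) : range (ptsA N x) = mu N := by
  ext z
  constructor
  · rintro ⟨i, rfl⟩
    exact Pt_mem hN _
  · intro hz
    obtain ⟨y, rfl⟩ := exists_Pt hN hz
    obtain ⟨k, h1, h2⟩ := exists_window' (N := N) (by exact_mod_cast hN) x y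
    refine ⟨⟨(y + k * N - x).toNat, by omega⟩, ?_⟩
    rw [ptsA, ← Pt_per hN y k]
    congr 1
    simp only
    omega

/-- The points `0, ζ_N^(s + 1), …, ζ_N^(s + n)`. -/
def ptsC (N n : ℕ) (s : ℤ) (i : Fin (n + 1)) : ℂ := if i.val = 0 then 0 else Pt N (s + i.val)

theorem ptsC_convex {N n : ℕ} (hn : 0 < n) (hN : 2 * n ≤ N) (s : ℤ) : ConvexPos (ptsC N n s) := by
  have hN0 : 0 < N := by omega
  constructor
  · intro i j h
    have h1 := i.isLt
    have h2 := j.isLt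
    apply Fin.ext
    unfold ptsC at h
    split_ifs at h with c1 c2 c2
    · omega
    · exact absurd h.symm (Pt_ne _ _)
    · exact absurd h (Pt_ne _ _)
    · obtain ⟨k, hk⟩ := (Pt_eq hN0 _ _).1 h
      have := mul_trich (N := N) (by exact_mod_cast hN0) k
      omega
  · intro i j k h1 h2
    have h3 := k.isLt
    rw [Fin.lt_def] at h1 h2
    have c2 : j.val ≠ 0 := by omega
    have c3 : k.val ≠ 0 := by omega
    simp only [ptsC, c2, c3, if_false]
    split_ifs with c1
    · exact orient_zero_Pt hN0 (by omega) (by omega)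
    · exact orient_Pt hN0 (by omega) (by omega) (by omega)

theorem ptsC_range {e n : ℕ} (s : ℤ) :
    range (ptsC (e * n) n s) = azeta e n (Pt (e * n) s) := by
  ext z
  constructor
  · rintro ⟨i, rfl⟩
    unfold ptsC
    split_ifs with h
    · exact Or.inl rfl
    · refine Or.inr ⟨i.val, by omega, by omega, ?_⟩
      rw [add_comm, Pt_add, Pt_nat]
  · rintro (rfl | ⟨k, h1, h2, rfl⟩)
    · exact ⟨0, by simp [ptsC]⟩
    · refine ⟨⟨k, by omega⟩, ?_⟩
      have : k ≠ 0 := by omega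
      simp only [ptsC, this, if_false]
      rw [add_comm, Pt_add, Pt_nat]

theorem resTo_singleton {X Y : Set ℂ} (h : X ⊆ Y) (h0 : X.Nonempty) : resTo X {Y} = {X} := by
  ext s
  constructor
  · rintro ⟨-, a, rfl, rfl⟩
    exact inter_eq_self_of_subset_right h
  · rintro rfl
    exact ⟨h0, Y, rfl, (inter_eq_self_of_subset_right h).symm⟩

section Compl

variable {e n : ℕ} {u v w : Set (Set ℂ)}

theorem triv_partition (e n : ℕ) : IsPartitionOf (insert 0 (mu (e * n))) (trivEE e n) := by
  constructor
  · rintro a rfl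
    exact ⟨⟨0, Or.inl rfl⟩, Subset.rfl⟩
  · exact fun z hz => ⟨_, ⟨rfl, hz⟩, fun y hy => hy.1⟩

theorem flat_triv (he : 2 ≤ e) (hn : 0 < n) : flatNCP (trivEE e n) = {mu (e * n)} := by
  have hN : 0 < e * n := by positivity
  rw [NCPee.flat_eq_resTo he hn (triv_partition e n)]
  exact resTo_singleton (subset_insert _ _) ⟨_, Pt_mem hN 0⟩

theorem triv_symm (he : 2 ≤ e) (hn : 0 < n) : SymmPart (trivEE e n) := by
  have hN : 0 < e * n := by positivity
  right
  rw [flat_triv he hn]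
  refine ⟨_, rfl, zero_mem_hull (z := 1) he (zeta_e_prim he hn) fun k => ?_⟩
  rw [mul_one, Pt_pow]
  exact Pt_mem hN _

/-- Forgetting `0` undoes the map `*`, whose values are symmetric. -/
theorem flat_star {k : Set (Set ℂ)} (he : 2 ≤ e) (hn : 0 < n) (hk : ∀ a ∈ k, a ⊆ mu (e * n))
    (hw : IsPartitionOf (insert 0 (mu (e * n))) (starNCP k)) :
    flatNCP (starNCP k) = k ∧ SymmPart (starNCP k) := by
  have hN : 0 < e * n := by positivity
  have h0 : ∀ a ∈ k, (0 : ℂ) ∉ a := fun a ha h => zero_notMem_mu hN (hk a ha h)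
  have hd : ∀ a ∈ k, a \ {0} = a := fun a ha => sdiff_singleton_eq_self (h0 a ha)
  have hd' : ∀ a ∈ k, insert 0 a \ {0} = a := fun a ha => by
    rw [insert_sdiff_of_mem _ (mem_singleton 0), hd a ha]
  by_cases hl : IsLong k
  · have hs : starNCP k = {s | ∃ a ∈ k, s = if (0 : ℂ) ∈ convexHull ℝ a then insert 0 a else a} :=
      if_pos hl
    have hne : ∀ a ∈ k, a.Nonempty := by
      intro a ha
      by_cases hc : (0 : ℂ) ∈ convexHull ℝ a
      · exact convexHull_nonempty_iff.1 ⟨0, hc⟩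
      · exact (hw.1 a (by rw [hs]; exact ⟨a, ha, by rw [if_neg hc]⟩)).1
    have hf : flatNCP (starNCP k) = k := by
      rw [hs]
      ext s
      constructor
      · rintro ⟨-, b, ⟨a, ha, rfl⟩, rfl⟩
        split_ifs
        · rwa [hd' a ha]
        · rwa [hd a ha]
      · intro hk
        refine ⟨hne s hk, _, ⟨s, hk, rfl⟩, ?_⟩
        split_ifs
        · rw [hd' s hk]
        · rw [hd s hk]
    exact ⟨hf, Or.inr (by rwa [hf])⟩
  · have hs : starNCP k = insert {(0 : ℂ)} k := if_neg hl
    refine ⟨?_, Or.inl (by rw [hs]; exact Or.inl rfl)⟩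
    have hne : ∀ a ∈ k, a.Nonempty := fun a ha => (hw.1 a (by rw [hs]; exact Or.inr ha)).1
    rw [hs]
    ext s
    constructor
    · rintro ⟨h1, b, rfl | hb, rfl⟩
      · simp at h1
      · rwa [hd b hb]
    · exact fun hk => ⟨hne s hk, s, Or.inr hk, (hd s hk).symm⟩

/-- The complement of a symmetric element of `NCP(e,e,n+1)`: the criteria `IsKrew.w_iff` and
`IsKrew.u_iff`, read on `μ_{en}` starting from an arbitrary point. -/
theorem symCompl (he : 2 ≤ e) (hn : 0 < n) (hu : u ∈ NCPee e n) (hw : w ∈ NCPee e n)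
    (h : IsComplEE e n u (trivEE e n) w) (hs : SymmPart u) :
    SymCompl (n : ℤ) ((e * n : ℕ) : ℤ) (RelP (e * n) u) (ZelP (e * n) u) (RelP (e * n) w)
      (ZelP (e * n) w) := by
  have hN : 0 < e * n := by positivity
  have hN' : (0 : ℤ) < (e * n : ℕ) := by exact_mod_cast hN
  rcases h.2 with ⟨-, -, k, hk, hwk⟩ | h | h
  rotate_left
  · exact absurd (triv_symm he hn) h.1
  · exact absurd hs h.1
  rw [flat_triv he hn] at hk
  have hf := flat_star (k := k) he hn (fun a ha => by
    obtain ⟨b, rfl, h2⟩ := hk.2.1 a ha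
    exact h2) (by rw [← hwk]; exact hw.1)
  rw [← hwk] at hf
  obtain ⟨rfl, hws⟩ := hf
  rw [NCPee.flat_eq_resTo he hn hu.1, NCPee.flat_eq_resTo he hn hw.1] at hk
  have key : ∀ x, ∃ su sw, IsKrew (fun i j => SB u (ptsA (e * n) x i) (ptsA (e * n) x j))
      (fun i j => SB w (ptsA (e * n) x i) (ptsA (e * n) x j)) su sw := by
    intro x
    rw [← ptsA_range hN x] at hk
    exact (ptsA_convex hN x).isKrew hu.1 hw.1 hw.2.1
      (by rw [ptsA_range hN]; exact subset_insert _ _) hk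
  have idx : ∀ x b : ℤ, ∃ k : ℤ, ∃ i : Fin (e * n), x + i.val = b + k * (e * n : ℕ) ∧
      ptsA (e * n) x i = Pt (e * n) b := by
    intro x b
    obtain ⟨k, h1, h2⟩ := exists_window' hN' x b
    have h3 : x + ((b + k * (e * n : ℕ) - x).toNat : ℤ) = b + k * (e * n : ℕ) := by omega
    refine ⟨k, ⟨(b + k * (e * n : ℕ) - x).toNat, by omega⟩, h3, ?_⟩
    rw [ptsA]
    simp only
    rw [h3, Pt_per hN]
  refine ⟨NCPee.data he hn hu, NCPee.data he hn hw, (NCPee.symm_iff he hn hu).1 hs,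
    (NCPee.symm_iff he hn hw).1 hws, fun x y h1 h2 => ?_, fun x y h1 h2 => ?_⟩
  · obtain ⟨su, sw, K⟩ := key x
    have hw := K.w_iff (i := ⟨0, hN⟩) (j := ⟨(y - x).toNat, by omega⟩)
      (by rw [Fin.lt_def]; simp only; omega)
    have e1 : x + ((y - x).toNat : ℤ) = y := by omega
    simp only [ptsA, Nat.cast_zero, add_zero, e1] at hw
    refine hw.trans ⟨fun hL a b hab h3 h4 => ?_, fun hS a b hab h3 h4 => ?_⟩
    · obtain ⟨k, i, h5, h6⟩ := idx x b
      have e2 : x + ((a - x).toNat : ℤ) = a := by omega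
      have := hL ⟨(a - x).toNat, by omega⟩ i (by
        simp only [e2]
        rw [ptsA] at h6
        rw [h6]
        exact hab) (by rw [Fin.le_def]; simp) (by rw [Fin.lt_def]; simp only; omega)
      rw [Fin.le_def, Fin.lt_def] at this
      simp only at this
      exact ⟨k, by omega, by omega⟩
    · rw [Fin.lt_def] at h4
      simp only at h4
      have h5 := b.isLt
      obtain ⟨k, h6, h7⟩ := hS _ _ hab (by omega) (by omega)
      have := mul_trich hN' k
      rw [Fin.le_def, Fin.lt_def]
      simp only
      omega
  · obtain ⟨su, sw, K⟩ := key x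
    have hw := K.u_iff (i := ⟨0, hN⟩) (j := ⟨(y - x).toNat, by omega⟩)
      (by rw [Fin.lt_def]; simp only; omega)
    have e1 : x + ((y - x).toNat : ℤ) = y := by omega
    simp only [ptsA, Nat.cast_zero, add_zero, e1] at hw
    refine hw.trans ⟨fun hL a b hab h3 h4 => ?_, fun hS a b hab h3 h4 => ?_⟩
    · obtain ⟨k, i, h5, h6⟩ := idx x b
      have e2 : x + ((a - x).toNat : ℤ) = a := by omega
      have := hL ⟨(a - x).toNat, by omega⟩ i (by
        simp only [e2]
        rw [ptsA] at h6
        rw [h6]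
        exact hab) (by rw [Fin.lt_def]; simp only; omega) (by rw [Fin.le_def]; simp only; omega)
      rw [Fin.le_def, Fin.lt_def] at this
      simp only at this
      exact ⟨k, by omega, by omega⟩
    · rw [Fin.le_def] at h4
      rw [Fin.lt_def] at h3
      simp only at h3 h4
      have h5 := b.isLt
      obtain ⟨k, h6, h7⟩ := hS _ _ hab (by omega) (by omega)
      have := mul_trich hN' k
      rw [Fin.le_def, Fin.lt_def]
      simp only
      omega

theorem Pt_mem_azeta {s a : ℤ} (hN : 0 < e * n) (h : Pt (e * n) a ∈ azeta e n (Pt (e * n) s)) :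
    ∃ k : ℤ, s < a + k * (e * n : ℕ) ∧ a + k * (e * n : ℕ) ≤ s + n := by
  rcases h with h | ⟨k, h1, h2, h⟩
  · exact absurd h (Pt_ne _ _)
  · rw [← Pt_nat, ← Pt_add] at h
    obtain ⟨j, hj⟩ := (Pt_eq hN _ _).1 h
    exact ⟨j, by omega, by omega⟩

/-- The complement of an asymmetric element of `NCP(e,e,n+1)`: the criteria `IsKrew.w_iff` and
`IsKrew.u_iff`, read on `0, ζ_N^(s + 1), …, ζ_N^(s + n)`. -/
theorem asymCompl (he : 2 ≤ e) (hn : 0 < n) (hu : u ∈ NCPee e n) (hw : w ∈ NCPee e n)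
    (h : IsComplEE e n u (trivEE e n) w) (hs : ¬ SymmPart u) :
    ∃ s, AsymCompl (n : ℤ) ((e * n : ℕ) : ℤ) s (RelP (e * n) u) (ZelP (e * n) u)
      (RelP (e * n) w) (ZelP (e * n) w) := by
  have hN : 0 < e * n := by positivity
  have h2N : 2 * n ≤ e * n := Nat.mul_le_mul_right _ he
  have hN' : (0 : ℤ) < (e * n : ℕ) := by exact_mod_cast hN
  have hn' : (0 : ℤ) < n := by exact_mod_cast hn
  rcases h.2 with h | h | ⟨-, ζ, hζ, hm, hM, hk⟩
  · exact absurd h.1 hs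
  · exact absurd (triv_symm he hn) h.1
  obtain ⟨s, rfl⟩ := exists_Pt hN hζ
  have hsub : azeta e n (Pt (e * n) s) ⊆ insert 0 (mu (e * n)) := by
    rintro z (rfl | ⟨k, -, -, rfl⟩)
    · exact Or.inl rfl
    · rw [← Pt_nat, ← Pt_add]
      exact Or.inr (Pt_mem hN _)
  have e0 : resTo (azeta e n (Pt (e * n) s)) (trivEE e n) = {azeta e n (Pt (e * n) s)} :=
    resTo_singleton hsub ⟨0, Or.inl rfl⟩
  rw [e0, ← ptsC_range] at hk
  rw [← ptsC_range] at hsub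
  obtain ⟨su, sw, K⟩ := (ptsC_convex hn h2N s).isKrew hu.1 hw.1 hw.2.1 hsub hk
  have c0 : ∀ i : Fin (n + 1), i.val = 0 → ptsC (e * n) n s i = 0 := fun i hi => if_pos hi
  have c1 : ∀ i : Fin (n + 1), i.val ≠ 0 → ptsC (e * n) n s i = Pt (e * n) (s + i.val) :=
    fun i hi => if_neg hi
  have idx : ∀ a, s < a → a ≤ s + n → ∃ i : Fin (n + 1), s + i.val = a ∧
      ptsC (e * n) n s i = Pt (e * n) a := by
    intro a h1 h2
    have h3 : s + ((a - s).toNat : ℤ) = a := by omega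
    refine ⟨⟨(a - s).toNat, by omega⟩, h3, ?_⟩
    rw [c1 _ (by simp only; omega)]
    simp only [h3]
  have z0 : ptsC (e * n) n s 0 = 0 := c0 0 rfl
  refine ⟨s, NCPee.data he hn hu, NCPee.data he hn hw, fun x hx => hs
    ((NCPee.symm_iff he hn hu).2 (Or.inr ⟨x, hx⟩)), ?_, ?_, ?_, ?_, ?_, ?_, ?_⟩
  · obtain ⟨b, hb, h1⟩ := hm {0, Pt (e * n) s} (Or.inl rfl)
    exact ⟨b, hb, h1 (Or.inl rfl), h1 (Or.inr rfl)⟩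
  · rintro a ⟨b, hb, h1, h2⟩
    obtain ⟨c, hc, h3⟩ := hM b hb
    rcases hc with rfl | ⟨ζ', hζe, hζ', rfl⟩
    · exact Pt_mem_azeta hN (h3 h2)
    · obtain ⟨z, hz, h4⟩ := h3 h1
      rcases mul_eq_zero.1 h4 with rfl | h4
      · -- `ζ' = 0` is not a root of unity
        rw [zero_pow (by omega)] at hζe
        exact absurd hζe zero_ne_one
      · exact absurd h4 hz.2
  · rintro a a' ⟨b, hb, h1, h2⟩ h4 h5
    obtain ⟨c, hc, h3⟩ := hM b hb
    rcases hc with rfl | ⟨ζ', hζe, hζ', rfl⟩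
    · exact Pt_mem_azeta hN (h3 h2)
    · exfalso
      obtain ⟨t, rfl⟩ := exists_Pt hN (z := ζ') (by
        change _ = _
        rw [pow_mul, hζe, one_pow])
      rw [Pt_pow, Pt_eq_one hN] at hζe
      obtain ⟨j, hj⟩ := hζe
      have hj' : t = n * j := by
        have : (e : ℤ) ≠ 0 := by omega
        apply mul_left_cancel₀ this
        rw [hj]; push_cast; ring
      obtain ⟨z, ⟨hz | ⟨k, d1, d2, rfl⟩, hz0⟩, h6⟩ := h3 h1
      · exact hz0 hz
      · simp only [← Pt_nat, ← Pt_add] at h6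
        obtain ⟨m, hm⟩ := (Pt_eq hN _ _).1 h6
        have e2 : a = s + k + (j + m * e) * n := by rw [hm, hj']; push_cast; ring
        have e3 := mul_trich hn' (j + m * e)
        have e4 : (j + m * e) * n = 0 := by omega
        apply hζ'
        rw [Pt_eq_one hN]
        refine ⟨-m, ?_⟩
        rw [hj']
        push_cast
        linarith
  · intro y h1 h2
    obtain ⟨j, d1, d2⟩ := idx y h1 h2
    have hk := K.w_iff (i := 0) (j := j) (by rw [Fin.lt_def]; simp only [Fin.val_zero]; omega)
    simp only [z0, d2] at hk
    refine hk.trans ⟨fun hL => ⟨fun b h3 h4 hb => ?_, fun a b h3 h4 h5 h6 hab => ?_⟩, ?_⟩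
    · obtain ⟨i, d3, d4⟩ := idx b (by omega) h4
      have := (hL 0 i (by rw [z0, d4]; exact hb) le_rfl
        (by rw [Fin.lt_def]; simp only [Fin.val_zero]; omega)).2
      rw [Fin.lt_def] at this
      omega
    · obtain ⟨i, d3, d4⟩ := idx b (by omega) h6
      obtain ⟨i', d5, d6⟩ := idx a (by omega) (by omega)
      have := (hL i' i (by rw [d6, d4]; exact hab) (Fin.zero_le _)
        (by rw [Fin.lt_def]; omega)).2
      rw [Fin.lt_def] at this
      omega
    · rintro ⟨hA, hB⟩ a b hab - h4
      rw [Fin.lt_def] at h4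
      refine ⟨Fin.zero_le _, ?_⟩
      rw [Fin.lt_def]
      by_contra! h5
      have := b.isLt
      rw [c1 b (by omega)] at hab
      by_cases ha : a.val = 0
      · rw [c0 a ha] at hab
        exact hA _ (by omega) (by omega) hab
      · rw [c1 a ha] at hab
        exact hB _ _ (by omega) (by omega) (by omega) (by omega) hab
  · intro x y h1 h2 h3
    obtain ⟨j, d1, d2⟩ := idx y (by omega) h3
    obtain ⟨i, d3, d4⟩ := idx x h1 (by omega)
    have hk := K.w_iff (i := i) (j := j) (by rw [Fin.lt_def]; omega)
    simp only [d2, d4] at hk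
    refine hk.trans ⟨fun hL a h4 h5 => ⟨fun hb => ?_, fun b h6 h7 hab => ?_⟩, ?_⟩
    · obtain ⟨l, d5, d6⟩ := idx a (by omega) (by omega)
      have := (hL l 0 (by rw [z0, d6]; exact hb.symm) (by rw [Fin.le_def]; omega)
        (by rw [Fin.lt_def]; omega)).1
      rw [Fin.le_def, Fin.val_zero] at this
      omega
    · obtain ⟨l, d5, d6⟩ := idx a (by omega) (by omega)
      obtain ⟨l', d7, d8⟩ := idx b (by omega) (by omega)
      have := hL l l' (by rw [d6, d8]; exact hab) (by rw [Fin.le_def]; omega)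
        (by rw [Fin.lt_def]; omega)
      rw [Fin.le_def, Fin.lt_def] at this
      omega
    · intro hL a b hab h4 h5
      rw [Fin.le_def] at h4
      rw [Fin.lt_def] at h5
      have ha : a.val ≠ 0 := by omega
      have := b.isLt
      obtain ⟨hA, hB⟩ := hL (s + a.val) (by omega) (by omega)
      rw [c1 a ha] at hab
      by_cases hb : b.val = 0
      · rw [c0 b hb] at hab
        exact absurd hab.symm hA
      · rw [c1 b hb] at hab
        have := hB _ (by omega) (by omega) hab
        rw [Fin.le_def, Fin.lt_def]
        omega
  · intro y h1 h2
    obtain ⟨j, d1, d2⟩ := idx y h1 h2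
    have hk := K.u_iff (i := 0) (j := j) (by rw [Fin.lt_def]; simp only [Fin.val_zero]; omega)
    simp only [z0, d2] at hk
    refine hk.trans ⟨fun hL a h3 h4 => ⟨fun hb => ?_, fun b h5 h6 hab => ?_⟩, ?_⟩
    · obtain ⟨i, d3, d4⟩ := idx a h3 (by omega)
      have := (hL i 0 (by rw [z0, d4]; exact hb.symm)
        (by rw [Fin.lt_def]; simp only [Fin.val_zero]; omega) (by rw [Fin.le_def]; omega)).1
      exact lt_irrefl _ this
    · obtain ⟨i, d3, d4⟩ := idx b h5 h6
      obtain ⟨i', d5, d6⟩ := idx a h3 (by omega)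
      have := (hL i' i (by rw [d6, d4]; exact hab)
        (by rw [Fin.lt_def]; simp only [Fin.val_zero]; omega) (by rw [Fin.le_def]; omega)).2
      rw [Fin.le_def] at this
      omega
    · intro hL a b hab h3 h4
      rw [Fin.le_def] at h4
      rw [Fin.lt_def, Fin.val_zero] at h3
      have := b.isLt
      obtain ⟨hA, hB⟩ := hL (s + a.val) (by omega) (by omega)
      rw [c1 a (by omega)] at hab
      by_cases hb : b.val = 0
      · rw [c0 b hb] at hab
        exact absurd hab.symm hA
      · rw [c1 b hb] at hab
        have := hB _ (by omega) (by omega) hab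
        rw [Fin.le_def, Fin.lt_def, Fin.val_zero]
        omega
  · intro x y h1 h2 h3
    obtain ⟨j, d1, d2⟩ := idx y (by omega) h3
    obtain ⟨i, d3, d4⟩ := idx x h1 (by omega)
    have hk := K.u_iff (i := i) (j := j) (by rw [Fin.lt_def]; omega)
    simp only [d2, d4] at hk
    refine hk.trans ⟨fun hL a h4 h5 => ⟨fun hb => ?_, fun b h6 h7 hab => ?_⟩, ?_⟩
    · obtain ⟨l, d5, d6⟩ := idx a (by omega) (by omega)
      have := (hL l 0 (by rw [z0, d6]; exact hb.symm) (by rw [Fin.lt_def]; omega)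
        (by rw [Fin.le_def]; omega)).1
      rw [Fin.lt_def, Fin.val_zero] at this
      omega
    · obtain ⟨l, d5, d6⟩ := idx a (by omega) (by omega)
      obtain ⟨l', d7, d8⟩ := idx b (by omega) (by omega)
      have := hL l l' (by rw [d6, d8]; exact hab) (by rw [Fin.lt_def]; omega)
        (by rw [Fin.le_def]; omega)
      rw [Fin.le_def, Fin.lt_def] at this
      omega
    · intro hL a b hab h4 h5
      rw [Fin.lt_def] at h4
      rw [Fin.le_def] at h5
      have ha : a.val ≠ 0 := by omega
      have := b.isLt
      obtain ⟨hA, hB⟩ := hL (s + a.val) (by omega) (by omega)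
      rw [c1 a ha] at hab
      by_cases hb : b.val = 0
      · rw [c0 b hb] at hab
        exact absurd hab.symm hA
      · rw [c1 b hb] at hab
        have := hB _ (by omega) (by omega) hab
        rw [Fin.le_def, Fin.lt_def]
        omega

end Compl

/-! ### Order reversal, types and the square of complementation -/

namespace NCData

variable {n N : ℤ} {R R' : ℤ → ℤ → Prop} {Z Z' : ℤ → Prop}

/-- Comparing two partitions, it suffices to look at points `x < y < x + N`. -/
theorem rel_of_lt (D : NCData n N R Z) (D' : NCData n N R' Z')
    (h : ∀ x y, x < y → y < x + N → R x y → R' x y) {x y : ℤ} (hR : R x y) : R' x y := by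
  obtain ⟨k, h1, h2⟩ := exists_window' D.Npos x y
  refine D'.trans ?_ (D'.symm (D'.per_mul k y))
  rcases h1.eq_or_lt with h1 | h1
  · rw [← h1]; exact D'.refl x
  · exact h _ _ h1 h2 (D.trans hR (D.per_mul k y))

/-- For a partition that is not long, it suffices to look at points `x < y < x + n`. -/
theorem rel_of_close (D : NCData n N R Z) (nl : ∀ x, ¬ R x (x + n)) (D' : NCData n N R' Z')
    (h : ∀ x y, x < y → y < x + n → R x y → R' x y) {x y : ℤ} (hR : R x y) : R' x y := by
  obtain ⟨k, h1, h2, h3⟩ := D.exists_close nl hR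
  refine D'.trans ?_ (D'.symm (D'.per_mul k y))
  rcases lt_trichotomy x (y + k * N) with h4 | h4 | h4
  · exact h _ _ h4 h2 h1
  · rw [← h4]; exact D'.refl x
  · exact D'.symm (h _ _ h4 h3 (D.symm h1))

/-- Rotating a partition by `ζ_N^c` translates its combinatorial shadow. -/
theorem translate (D : NCData n N R Z) (c : ℤ) :
    NCData n N (fun x y => R (x - c) (y - c)) (fun x => Z (x - c)) where
  npos := D.npos
  two := D.two
  dvd := D.dvd
  refl x := D.refl _
  symm h := D.symm h
  trans h h' := D.trans h h'
  per x := by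
    have := D.per (x - c)
    convert this using 1; ring
  shift {x y} h := by
    have := D.shift h
    convert this using 1 <;> ring
  nc h1 h2 h3 h4 h h' := D.nc (by omega) (by omega) (by omega) (by omega) h h'
  zz h h' := D.zz h h'
  zr h h' := D.zr h h'
  znc h1 h2 h3 h h' := D.znc (by omega) (by omega) (by omega) h h'
  zlong {x} h := D.zlong (by convert h using 1; ring)

/-- In a symmetric partition the part of `0` is invariant under `μ_e`. -/
theorem z_mul (D : NCData n N R Z) (hs : (∀ x, ¬ Z x) ∨ ∃ x, R x (x + n)) {x : ℤ}
    (h : Z x) (k : ℤ) : Z (x + k * n) :=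
  D.zlong (by
    have := D.shift_mul k (D.zshift_of_long hs h)
    convert this using 1; ring)

/-- A long part meets every window of length `n` without being contained in it. -/
theorem not_sat_of_long (D : NCData n N R Z) (hl : ∃ x, R x (x + n)) (y : ℤ) :
    ¬ Sat N R y (y + n) := by
  intro hS
  obtain ⟨x, hx⟩ := hl
  have hn := D.npos
  have htwo := D.two
  obtain ⟨k, h1, h2⟩ := exists_window' hn y x
  obtain ⟨j, h3, h4⟩ := hS _ _ (D.shift_mul k hx) h1 h2
  have := mul_trich D.Npos j
  have e1 : x + n + k * n = x + k * n + n := by ring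
  omega

/-- Saturated intervals of length less than `n` for a partition without long part. -/
theorem sat_of_close (D : NCData n N R Z) (nl : ∀ x, ¬ R x (x + n)) {x y : ℤ}
    (h : ∀ a b, R a b → b < a + n → a < b + n → x ≤ a → a < y → x ≤ b ∧ b < y) :
    Sat N R x y := by
  intro a b hab h1 h2
  obtain ⟨k, h3, h4, h5⟩ := D.exists_close nl hab
  exact ⟨k, h _ _ h3 h4 h5 h1 h2⟩

end NCData

namespace SymCompl

variable {n N : ℤ} {Ru Rw Ru' Rw' : ℤ → ℤ → Prop} {Zu Zw Zu' Zw' : ℤ → Prop}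

/-- The complement of a short symmetric partition is long. -/
theorem w_long (h : SymCompl n N Ru Zu Rw Zw) (hs : ∀ x, ¬ Zu x) : ∃ x, Rw x (x + n) := by
  have hn := h.u.npos
  have htwo := h.u.two
  obtain ⟨x, hx⟩ := h.u.exists_sat fun x hx => hs x (h.u.zlong hx)
  exact ⟨x, (h.wS x (x + n) (by omega) (by omega)).2 hx⟩

/-- The complement of a long symmetric partition is short. -/
theorem w_short (h : SymCompl n N Ru Zu Rw Zw) (hl : ∃ x, Ru x (x + n)) (y : ℤ) : ¬ Zw y := by
  intro hy
  have hn := h.u.npos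
  have htwo := h.u.two
  exact h.u.not_sat_of_long hl y
    ((h.wS y (y + n) (by omega) (by omega)).1 (h.w.zshift_of_long h.ws hy))

/-- Complementation reverses the order on symmetric partitions. -/
theorem anti (h : SymCompl n N Ru Zu Rw Zw) (h' : SymCompl n N Ru' Zu' Rw' Zw')
    (hR : ∀ x y, Ru x y → Ru' x y) :
    (∀ x y, Rw' x y → Rw x y) ∧ ∀ x, Zw' x → Zw x := by
  have key : ∀ x y, Rw' x y → Rw x y := fun x y hxy =>
    h'.w.rel_of_lt h.w (fun x y h1 h2 h3 => (h.wS x y h1 h2).2 fun a b hab =>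
      (h'.wS x y h1 h2).1 h3 a b (hR a b hab)) hxy
  exact ⟨key, fun x hx => h.w.zlong (key _ _ (h'.w.zshift_of_long h'.ws hx))⟩

/-- Complementation reverses the order, for a symmetric partition below an asymmetric one. -/
theorem anti_asym {s : ℤ} (h : SymCompl n N Ru Zu Rw Zw) (h' : AsymCompl n N s Ru' Zu' Rw' Zw')
    (hR : ∀ x y, Ru x y → Ru' x y) :
    (∀ x y, Rw' x y → Rw x y) ∧ ∀ x, Zw' x → Zw x := by
  have hn := h.u.npos
  have htwo := h.u.two
  have nl : ∀ x, ¬ Ru x (x + n) := fun x hx => h'.unl x (hR _ _ hx)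
  constructor
  · intro x y hxy
    refine h'.w.rel_of_close h'.wnl h.w (fun x y h1 h2 h3 => ?_) hxy
    have hS := (h'.w_close_iff h1 h2).1 h3
    exact (h.wS x y h1 (by omega)).2 (h.u.sat_of_close nl fun a b hab c1 c2 c3 c4 =>
      (hS a c3 c4).2 b (hR _ _ hab) c1 c2)
  · intro y hy
    have hS := ((h'.w_zero_iff y).1 hy).2
    have : Rw (y - n) y := (h.wS _ _ (by omega) (by omega)).2
      (h.u.sat_of_close nl fun a b hab => hS a b (hR _ _ hab))
    exact h.w.zlong (by simpa using h.w.shift this)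

/-- The square of complementation on symmetric partitions. -/
theorem square (h : SymCompl n N Ru Zu Rw Zw) (h' : SymCompl n N Rw Zw Rw' Zw') :
    (∀ x y, Rw' x y ↔ Ru (x - (n + 1)) (y - (n + 1))) ∧ ∀ x, Zw' x ↔ Zu (x - (n + 1)) := by
  have hn := h.u.npos
  have htwo := h.u.two
  have close : ∀ x y, x < y → y < x + N → (Rw' x y ↔ Ru (x - (n + 1)) (y - (n + 1))) := by
    intro x y h1 h2
    have h3 := h.uS (x - 1) (y - 1) (by omega) (by omega)
    rw [sub_add_cancel, sub_add_cancel] at h3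
    rw [h'.wS x y h1 h2, ← h3, ← h.u.shift_iff (-1)]
    have e1 : ∀ z : ℤ, z - 1 + -1 * n = z - (n + 1) := fun z => by ring
    rw [e1, e1]
  have key : ∀ x y, Rw' x y ↔ Ru (x - (n + 1)) (y - (n + 1)) := fun x y =>
    ⟨h'.w.rel_of_lt (h.u.translate (n + 1)) fun x y h1 h2 => (close x y h1 h2).1,
      (h.u.translate (n + 1)).rel_of_lt h'.w fun x y h1 h2 => (close x y h1 h2).2⟩
  refine ⟨key, fun x => ?_⟩
  have e2 : x + n - (n + 1) = x - (n + 1) + n := by ring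
  have h3 := key x (x + n)
  rw [e2] at h3
  exact ⟨fun hx => h.u.zlong (h3.1 (h'.w.zshift_of_long h'.ws hx)),
    fun hx => h'.w.zlong (h3.2 (h.u.zshift_of_long h.us hx))⟩

end SymCompl

namespace AsymCompl

variable {n N s s' : ℤ} {Ru Rw Ru' Rw' : ℤ → ℤ → Prop} {Zu Zw Zu' Zw' : ℤ → Prop}

/-- Complementation reverses the order, for an asymmetric partition below a symmetric one. -/
theorem anti_symm (h : AsymCompl n N s Ru Zu Rw Zw) (h' : SymCompl n N Ru' Zu' Rw' Zw')
    (hR : ∀ x y, Ru x y → Ru' x y) (hZ : ∀ x, Zu x → Zu' x) :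
    (∀ x y, Rw' x y → Rw x y) ∧ ∀ x, Zw' x → Zw x := by
  have hn := h.u.npos
  have htwo := h.u.two
  obtain ⟨e, he⟩ := h.u.dvd
  have hzs := hZ s h.zs
  have hl : ∃ x, Ru' x (x + n) := ⟨s, h'.u.zshift_of_long h'.us hzs⟩
  refine ⟨fun x y hxy => ?_, fun x hx => absurd hx (h'.w_short hl x)⟩
  -- the case of an interval avoiding the points `s + k n`, which all lie in the long part
  have key : ∀ x y, x < y → y < x + N → (∀ k : ℤ, x ≤ s + k * n → ¬ s + k * n < y) →
      Rw' x y → Rw x y := by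
    intro x y h1 h2 hk h3
    have hS := (h'.wS x y h1 h2).1 h3
    have h4 : y < x + n := by
      obtain ⟨k, c1, c2⟩ := exists_window' hn x s
      have := hk k c1
      omega
    refine (h.w_close_iff h1 h4).2 fun z c1 c2 => ⟨fun k hz => ?_, fun z' hR' c3 c4 => ?_⟩
    · have h5 := h'.u.z_mul h'.us (hZ _ hz) (-k)
      have e1 : z + k * n + -k * n = z := by ring
      rw [e1] at h5
      obtain ⟨j, d1, d2⟩ := hS _ _ (h'.u.zz h5 hzs) c1 c2
      have e2 : s + j * N = s + (j * e) * n := by rw [he]; ring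
      rw [e2] at d1 d2
      exact hk _ d1 d2
    · obtain ⟨j, d1, d2⟩ := hS _ _ (hR _ _ hR') c1 c2
      have := mul_trich h.u.Npos j
      omega
  refine h'.w.rel_of_lt h.w (fun x y h1 h2 h3 => ?_) hxy
  by_cases hk : ∀ k : ℤ, x ≤ s + k * n → ¬ s + k * n < y
  · exact key x y h1 h2 hk h3
  push Not at hk
  obtain ⟨k, c1, c2⟩ := hk
  have hS := (h'.wS x y h1 h2).1 h3
  -- `[x, y)` contains all the points `s + m n` modulo `N`, so that `[y, x + N)` avoids them
  have h4 := key y (x + N) h2 (by omega) (fun m d1 d2 => by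
    obtain ⟨j, d3, d4⟩ := hS _ _ (h'.u.zz (h'.u.z_mul h'.us hzs k) (h'.u.z_mul h'.us hzs m)) c1 c2
    have := mul_trich h.u.Npos j
    omega) (h'.w.trans (h'.w.symm h3) (h'.w.per x))
  exact h.w.trans (h.w.per x) (h.w.symm h4)

/-- Complementation reverses the order on asymmetric partitions. -/
theorem anti (h : AsymCompl n N s Ru Zu Rw Zw) (h' : AsymCompl n N s' Ru' Zu' Rw' Zw')
    (hR : ∀ x y, Ru x y → Ru' x y) (hZ : ∀ x, Zu x → Zu' x) :
    (∀ x y, Rw' x y → Rw x y) ∧ ∀ x, Zw' x → Zw x := by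
  constructor
  · intro x y hxy
    refine h'.w.rel_of_close h'.wnl h.w (fun x y h1 h2 h3 => ?_) hxy
    have hS := (h'.w_close_iff h1 h2).1 h3
    exact (h.w_close_iff h1 h2).2 fun z c1 c2 =>
      ⟨fun k hk => (hS z c1 c2).1 k (hZ _ hk), fun z' hz => (hS z c1 c2).2 z' (hR _ _ hz)⟩
  · intro y hy
    obtain ⟨⟨z, h1, h2, h3⟩, hS⟩ := (h'.w_zero_iff y).1 hy
    obtain ⟨k, c1, c2, c3⟩ := h'.u.exists_close h'.unl (h'.u.zz h3 (hZ s h.zs))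
    have h4 := hS _ _ c1 c2 c3 h1 h2
    exact (h.w_zero_iff y).2 ⟨⟨s + k * N, h4.1, h4.2, (h.u.zper k).2 h.zs⟩,
      fun z z' hz => hS z z' (hR _ _ hz)⟩

/-- The square of complementation on asymmetric partitions. -/
theorem square (h : AsymCompl n N s Ru Zu Rw Zw) (h' : AsymCompl n N s' Rw Zw Rw' Zw') :
    (∀ x y, Rw' x y ↔ Ru (x - (n + 1)) (y - (n + 1))) ∧ ∀ x, Zw' x ↔ Zu (x - (n + 1)) := by
  have close : ∀ x y, x < y → y < x + n → (Rw' x y ↔ Ru (x - (n + 1)) (y - (n + 1))) := by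
    intro x y h1 h2
    have h3 := h.u_close_iff (x := x - 1) (y := y - 1) (by omega) (by omega)
    rw [sub_add_cancel, sub_add_cancel] at h3
    rw [h'.w_close_iff h1 h2, ← h3, ← h.u.shift_iff (-1)]
    have e1 : ∀ z : ℤ, z - 1 + -1 * n = z - (n + 1) := fun z => by ring
    rw [e1, e1]
  have nl : ∀ x, ¬ Ru (x - (n + 1)) (x + n - (n + 1)) := fun x hx =>
    h.unl _ (by convert hx using 1; ring)
  refine ⟨fun x y =>
    ⟨h'.w.rel_of_close h'.wnl (h.u.translate (n + 1)) fun x y h1 h2 => (close x y h1 h2).1,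
      (h.u.translate (n + 1)).rel_of_close nl h'.w fun x y h1 h2 => (close x y h1 h2).2⟩,
    fun x => ?_⟩
  rw [h'.w_zero_iff, h.u_zero_iff]
  have e2 : x - (n + 1) + n + 1 = x := by ring
  rw [e2]

end AsymCompl

/-! ### Rotations and the main results -/

theorem rotate_rotate (a b : ℂ) (u : Set (Set ℂ)) : rotate a (rotate b u) = rotate (a * b) u := by
  simp only [rotate, image_image, mul_assoc]

theorem rotate_one (u : Set (Set ℂ)) : rotate 1 u = u := by
  simp [rotate]

theorem Refines.rotate {u v : Set (Set ℂ)} (c : ℂ) (h : Refines u v) :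
    Refines (rotate c u) (_root_.rotate c v) := by
  rintro _ ⟨a, ha, rfl⟩
  obtain ⟨b, hb, hab⟩ := h a ha
  exact ⟨_, ⟨b, hb, rfl⟩, image_mono hab⟩

theorem refines_rotate {c : ℂ} (hc : c ≠ 0) (u v : Set (Set ℂ)) :
    Refines u v ↔ Refines (rotate c u) (rotate c v) := by
  refine ⟨fun h => h.rotate c, fun h => ?_⟩
  have := h.rotate c⁻¹
  simpa only [rotate_rotate, inv_mul_cancel₀ hc, rotate_one] using this

theorem sb_rotate {c : ℂ} (hc : c ≠ 0) (u : Set (Set ℂ)) (x y : ℂ) :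
    SB (rotate c u) (c * x) (c * y) ↔ SB u x y := by
  have hinj := mul_right_injective₀ hc
  constructor
  · rintro ⟨_, ⟨b, hb, rfl⟩, h1, h2⟩
    exact ⟨b, hb, hinj.mem_set_image.1 h1, hinj.mem_set_image.1 h2⟩
  · rintro ⟨b, hb, h1, h2⟩
    exact ⟨_, ⟨b, hb, rfl⟩, mem_image_of_mem _ h1, mem_image_of_mem _ h2⟩

theorem relP_rotate {N : ℕ} (c : ℤ) (u : Set (Set ℂ)) (x y : ℤ) :
    RelP N (rotate (Pt N c) u) x y ↔ RelP N u (x - c) (y - c) := by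
  have h : ∀ z, Pt N z = Pt N c * Pt N (z - c) := fun z => by
    rw [← Pt_add]; congr 1; ring
  rw [RelP, h x, h y, sb_rotate (Pt_ne _ _)]
  rfl

theorem zelP_rotate {N : ℕ} (c : ℤ) (u : Set (Set ℂ)) (x : ℤ) :
    ZelP N (rotate (Pt N c) u) x ↔ ZelP N u (x - c) := by
  have h : Pt N x = Pt N c * Pt N (x - c) := by
    rw [← Pt_add]; congr 1; ring
  have := sb_rotate (Pt_ne N c) u 0 (Pt N (x - c))
  rw [mul_zero, ← h] at this
  exact this

theorem flat_rotate {c : ℂ} (hc : c ≠ 0) (u : Set (Set ℂ)) :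
    flatNCP (rotate c u) = rotate c (flatNCP u) := by
  have hinj := mul_right_injective₀ hc
  have h0 : ∀ a : Set ℂ, ((fun z => c * z) '' a) \ {0} = (fun z => c * z) '' (a \ {0}) := by
    intro a
    rw [image_sdiff hinj, image_singleton, mul_zero]
  ext s
  constructor
  · rintro ⟨h1, _, ⟨a, ha, rfl⟩, rfl⟩
    simp only [h0] at h1 ⊢
    exact ⟨_, ⟨image_nonempty.1 h1, a, ha, rfl⟩, rfl⟩
  · rintro ⟨_, ⟨h1, a, ha, rfl⟩, rfl⟩
    exact ⟨h1.image _, _, ⟨a, ha, rfl⟩, (h0 a).symm⟩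

/-- `NCP(e,e,n+1)` is stable under rotation by the roots of unity of order `e n`. -/
theorem NCPee.rotate_mem {e n : ℕ} (he : 2 ≤ e) (hn : 0 < n) {c : ℂ} (hc : c ^ (e * n) = 1)
    {u : Set (Set ℂ)} (hu : u ∈ NCPee e n) : rotate c u ∈ NCPee e n := by
  have hN : e * n ≠ 0 := by positivity
  have hc0 : c ≠ 0 := by
    rintro rfl
    rw [zero_pow hN] at hc
    exact zero_ne_one hc
  have hinj := mul_right_injective₀ hc0
  obtain ⟨⟨hp1, hp2⟩, hnc, hinv⟩ := hu
  refine ⟨⟨?_, fun z hz => ?_⟩, ?_, fun ζ hζ => ?_⟩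
  · rintro _ ⟨a, ha, rfl⟩
    refine ⟨(hp1 a ha).1.image _, ?_⟩
    rintro _ ⟨z, hz, rfl⟩
    rcases (hp1 a ha).2 hz with rfl | h
    · left; exact mul_zero c
    · right
      change (c * z) ^ (e * n) = 1
      rw [mul_pow, hc, one_mul]
      exact h
  · have hz' : c⁻¹ * z ∈ insert (0 : ℂ) (mu (e * n)) := by
      rcases hz with rfl | h
      · left; exact mul_zero _
      · right
        change (c⁻¹ * z) ^ (e * n) = 1
        rw [mul_pow, inv_pow, hc, inv_one, one_mul]
        exact h
    have e1 : c * (c⁻¹ * z) = z := by rw [← mul_assoc, mul_inv_cancel₀ hc0, one_mul]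
    obtain ⟨a, ⟨ha, hza⟩, huniq⟩ := hp2 _ hz'
    refine ⟨_, ⟨⟨a, ha, rfl⟩, ⟨_, hza, e1⟩⟩, ?_⟩
    rintro _ ⟨⟨b, hb, rfl⟩, hzb⟩
    rw [← e1] at hzb
    rw [huniq b ⟨hb, hinj.mem_set_image.1 hzb⟩]
  · rintro _ ⟨a, ha, rfl⟩ _ ⟨b, hb, rfl⟩ ⟨z, h1, h2⟩
    rw [hull_mul] at h1 h2
    obtain ⟨x, hx, rfl⟩ := h1
    rw [hnc a ha b hb ⟨x, hx, hinj.mem_set_image.1 h2⟩]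
  · rw [flat_rotate hc0, rotate_rotate, mul_comm, ← rotate_rotate, hinv ζ hζ]

/-- Complementation reverses the order. -/
theorem complEE_anti {e n : ℕ} (he : 2 ≤ e) (hn : 0 < n) {u u' w w' : Set (Set ℂ)}
    (hu : u ∈ NCPee e n) (hu' : u' ∈ NCPee e n) (hw : w ∈ NCPee e n) (hw' : w' ∈ NCPee e n)
    (h : IsComplEE e n u (trivEE e n) w) (h' : IsComplEE e n u' (trivEE e n) w')
    (hr : Refines u u') : Refines w' w := by
  obtain ⟨hR, hZ⟩ := (NCPee.refines_iff he hn hu.1 hu'.1).1 hr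
  rw [NCPee.refines_iff he hn hw'.1 hw.1]
  by_cases hs : SymmPart u <;> by_cases hs' : SymmPart u'
  · exact (symCompl he hn hu hw h hs).anti (symCompl he hn hu' hw' h' hs') hR
  · obtain ⟨s, D⟩ := asymCompl he hn hu' hw' h' hs'
    exact (symCompl he hn hu hw h hs).anti_asym D hR
  · obtain ⟨s, D⟩ := asymCompl he hn hu hw h hs
    exact D.anti_symm (symCompl he hn hu' hw' h' hs') hR hZ
  · obtain ⟨s, D⟩ := asymCompl he hn hu hw h hs
    obtain ⟨s', D'⟩ := asymCompl he hn hu' hw' h' hs'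
    exact D.anti D' hR hZ

/-- Complementation exchanges short and long symmetric partitions and preserves asymmetry. -/
theorem complEE_type {e n : ℕ} (he : 2 ≤ e) (hn : 0 < n) {u w : Set (Set ℂ)}
    (hu : u ∈ NCPee e n) (hw : w ∈ NCPee e n) (h : IsComplEE e n u (trivEE e n) w) :
    ((({0} : Set ℂ) ∈ u → IsLong (flatNCP w)) ∧ (IsLong (flatNCP u) → ({0} : Set ℂ) ∈ w) ∧
      (¬ SymmPart u → ¬ SymmPart w)) := by
  refine ⟨fun h0 => ?_, fun hl => ?_, fun hs => ?_⟩
  · rw [NCPee.long_iff he hn hw]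
    exact (symCompl he hn hu hw h (Or.inl h0)).w_long ((NCPee.short_iff he hn hu.1).1 h0)
  · rw [NCPee.short_iff he hn hw.1]
    exact (symCompl he hn hu hw h (Or.inr hl)).w_short ((NCPee.long_iff he hn hu).1 hl)
  · obtain ⟨s, D⟩ := asymCompl he hn hu hw h hs
    rw [NCPee.symm_iff he hn hw]
    obtain ⟨z, -, -, hz⟩ := D.exists_zw
    rintro (h1 | ⟨x, hx⟩)
    · exact h1 z hz
    · exact D.wnl x hx

/-- The square of complementation is the rotation by `ζ_{en}^(n+1)`. -/
theorem complEE_square {e n : ℕ} (he : 2 ≤ e) (hn : 0 < n) {u w w' : Set (Set ℂ)}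
    (hu : u ∈ NCPee e n) (hw : w ∈ NCPee e n) (hw' : w' ∈ NCPee e n)
    (h : IsComplEE e n u (trivEE e n) w) (h' : IsComplEE e n w (trivEE e n) w') :
    w' = rotate (zeta (e * n) ^ (n + 1)) u := by
  have hN : 0 < e * n := by positivity
  obtain ⟨t1, t2, t3⟩ := complEE_type he hn hu hw h
  have key : (∀ x y, RelP (e * n) w' x y ↔ RelP (e * n) u (x - (n + 1)) (y - (n + 1))) ∧
      ∀ x, ZelP (e * n) w' x ↔ ZelP (e * n) u (x - (n + 1)) := by
    by_cases hs : SymmPart u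
    · have hsw : SymmPart w := hs.elim (fun h0 => Or.inr (t1 h0)) fun hl => Or.inl (t2 hl)
      exact (symCompl he hn hu hw h hs).square (symCompl he hn hw hw' h' hsw)
    · obtain ⟨s, D⟩ := asymCompl he hn hu hw h hs
      obtain ⟨s', D'⟩ := asymCompl he hn hw hw' h' (t3 hs)
      exact D.square D'
  have e1 : zeta (e * n) ^ (n + 1) = Pt (e * n) ((n : ℤ) + 1) := by
    rw [← Pt_nat]; push_cast; rfl
  have hmem : rotate (zeta (e * n) ^ (n + 1)) u ∈ NCPee e n :=
    NCPee.rotate_mem he hn (by rw [e1]; exact Pt_mem hN _) hu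
  refine NCPee.eq_of_rel he hn hw'.1 hmem.1 (fun x y => ?_) fun x => ?_
  · rw [e1, relP_rotate]; exact key.1 x y
  · rw [e1, zelP_rotate]; exact key.2 x

/-- The complement `u ↦ ū` of `NCP(e,e,n+1)` is a poset anti-automorphism
sending short symmetric elements to long symmetric ones, long symmetric to
short symmetric, and asymmetric to asymmetric; the double complement
`φ : u ↦ ū̄` is a poset automorphism equal to multiplication of the underlying
set by `ζ_e ζ_{en} = ζ_{en}^{n+1}`. -/
theorem stmt14 (e n : ℕ) (he : 2 ≤ e) (hn : 0 < n) :
    (∀ u u' w w', u ∈ NCPee e n → u' ∈ NCPee e n → w ∈ NCPee e n →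
       w' ∈ NCPee e n →
       IsComplEE e n u (trivEE e n) w → IsComplEE e n u' (trivEE e n) w' →
       Refines u u' → Refines w' w) ∧
    (∀ u w w', u ∈ NCPee e n → w ∈ NCPee e n → w' ∈ NCPee e n →
       IsComplEE e n u (trivEE e n) w → IsComplEE e n w (trivEE e n) w' →
       w' = rotate (zeta (e * n) ^ (n + 1)) u) ∧
    (∀ u w, u ∈ NCPee e n → w ∈ NCPee e n →
       IsComplEE e n u (trivEE e n) w →
       ((({0} : Set ℂ) ∈ u → IsLong (flatNCP w)) ∧
        (IsLong (flatNCP u) → ({0} : Set ℂ) ∈ w) ∧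
        (¬ SymmPart u → ¬ SymmPart w))) ∧
    (∀ u, u ∈ NCPee e n →
       rotate (zeta (e * n) ^ (n + 1)) u ∈ NCPee e n ∧
       ∀ u', u' ∈ NCPee e n →
         (Refines u u' ↔
           Refines (rotate (zeta (e * n) ^ (n + 1)) u)
             (rotate (zeta (e * n) ^ (n + 1)) u'))) := by
  have hN : 0 < e * n := by positivity
  refine ⟨fun u u' w w' hu hu' hw hw' h h' => complEE_anti he hn hu hu' hw hw' h h',
    fun u w w' hu hw hw' h h' => complEE_square he hn hu hw hw' h h',
    fun u w hu hw h => complEE_type he hn hu hw h, fun u hu => ⟨?_, fun u' _ => ?_⟩⟩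
  · refine NCPee.rotate_mem he hn ?_ hu
    rw [← Pt_nat]
    exact Pt_mem hN _
  · exact refines_rotate (by rw [← Pt_nat]; exact Pt_ne _ _) u u'
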